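/- arXiv:2202.07480 — 3 statements merged into one kernel-verified Lean document; each statement's English description precedes it below -/
import Mathlib

section
/- Let ⟨G, Eℓ⟩ be a two-player game graph with live edges and let ⟨F, Q⟩ be a safe generalized Büchi winning condition with Q ⊆ V and F = {F_1, …, F_s}, F_b ⊆ V. Define Z* := νY. ⋂_{b=1}^{s} μ X_b. ( Q ∩ [ (F_b ∩ Cpre(Y)) ∪ Apre(Y, X_b) ] ), i.e. the greatest fixed point of the monotone map Y ↦ ⋂_{b=1}^{s} lfp( X_b ↦ Q ∩ [ (F_b ∩ Cpre(Y)) ∪ Apre(Y, X_b) ] ). Then Z* equals the winning region W of Player 0 in the fair adversarial game over ⟨G, Eℓ⟩ for the winning condition φ = □Q ∧ ⋀_{b=1}^{s} □◇F_b (i.e. the set of plays π with π(i) ∈ Q for all i and, for every b, π(i) ∈ F_b for infinitely many i). Moreover, there exists a finite-memory Player-0 strategy that wins the fair adversarial game for φ from every vertex of Z*. -/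
/-- Least fixed point of a set transformer (Knaster–Tarski form). -/
def lfpSet {V : Type*} (f : Set V → Set V) : Set V := sInf {X | f X ⊆ X}

/-- Greatest fixed point of a set transformer (Knaster–Tarski form). -/
def gfpSet {V : Type*} (f : Set V → Set V) : Set V := sSup {X | X ⊆ f X}

/-- A two-player game graph with live edges: vertices are partitioned into
Player-0 vertices `V0` and Player-1 vertices `V1`, every vertex has a successor,
and live edges `El` are Player-1 edges. -/
structure LiveGameGraph (V : Type*) where
  V0 : Set V
  V1 : Set V
  E : V → V → Prop
  El : V → V → Prop
  cover : V0 ∪ V1 = Set.univ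
  disj : V0 ∩ V1 = ∅
  succ_nonempty : ∀ v : V, ∃ w, E v w
  live_sub : ∀ v w, El v w → v ∈ V1 ∧ E v w

namespace LiveGameGraph

variable {V : Type*}

/-- Pre∃0(S) -/
def pre0 (Gm : LiveGameGraph V) (S : Set V) : Set V :=
  {v | v ∈ Gm.V0 ∧ ∃ w, Gm.E v w ∧ w ∈ S}

/-- Pre∀1(S) -/
def pre1 (Gm : LiveGameGraph V) (S : Set V) : Set V :=
  {v | v ∈ Gm.V1 ∧ ∀ w, Gm.E v w → w ∈ S}

/-- Cpre(S) -/
def cpre (Gm : LiveGameGraph V) (S : Set V) : Set V := Gm.pre0 S ∪ Gm.pre1 S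

/-- Lpre∃(T) -/
def lpre (Gm : LiveGameGraph V) (T : Set V) : Set V :=
  {v | ∃ w, Gm.El v w ∧ w ∈ T}

/-- Apre(S,T) -/
def apre (Gm : LiveGameGraph V) (S T : Set V) : Set V :=
  Gm.cpre T ∪ (Gm.lpre T ∩ Gm.pre1 S)

end LiveGameGraph

namespace LiveGameGraph

variable {V : Type*}

/-- A play is strongly transition fair if every live edge whose source is visited
infinitely often is itself taken infinitely often. -/
def StronglyFair (Gm : LiveGameGraph V) (π : ℕ → V) : Prop :=
  ∀ v w, Gm.El v w → {i | π i = v}.Infinite → {i | π i = v ∧ π (i + 1) = w}.Infinite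

/-- A Player-0 strategy: given the history (the prefix before the current vertex)
and the current vertex, it chooses an `E`-successor whenever the current vertex
belongs to Player 0. -/
def Strategy0 (Gm : LiveGameGraph V) (ρ : List V → V → V) : Prop :=
  ∀ h v, v ∈ Gm.V0 → Gm.E v (ρ h v)

/-- A Player-1 strategy. -/
def Strategy1 (Gm : LiveGameGraph V) (ρ : List V → V → V) : Prop :=
  ∀ h v, v ∈ Gm.V1 → Gm.E v (ρ h v)

/-- The play compliant with the strategies `ρ0` and `ρ1` starting at `v0`. -/
def Compliant (Gm : LiveGameGraph V) (ρ0 ρ1 : List V → V → V) (v0 : V)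
    (π : ℕ → V) : Prop :=
  π 0 = v0 ∧ ∀ i : ℕ,
    (π i ∈ Gm.V0 → π (i + 1) = ρ0 (List.ofFn fun j : Fin i => π j.1) (π i)) ∧
    (π i ∈ Gm.V1 → π (i + 1) = ρ1 (List.ofFn fun j : Fin i => π j.1) (π i))

/-- Player 0 wins the fair adversarial game for the winning condition `φ`
from `v0` using the strategy `ρ0`. -/
def WinsFrom (Gm : LiveGameGraph V) (φ : (ℕ → V) → Prop)
    (ρ0 : List V → V → V) (v0 : V) : Prop :=
  Gm.Strategy0 ρ0 ∧ ∀ ρ1, Gm.Strategy1 ρ1 → ∀ π, Gm.Compliant ρ0 ρ1 v0 π →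
    (Gm.StronglyFair π → φ π)

/-- The winning region of Player 0 in the fair adversarial game for `φ`. -/
def WinningRegion (Gm : LiveGameGraph V) (φ : (ℕ → V) → Prop) : Set V :=
  {v0 | ∃ ρ0, Gm.WinsFrom φ ρ0 v0}

end LiveGameGraph

theorem lfpSet_le_of {V : Type*} {f : Set V → Set V} {X : Set V} (h : f X ⊆ X) :
    lfpSet f ⊆ X := sInf_le h

theorem lfpSet_pre {V : Type*} {f : Set V → Set V} (hf : Monotone f) :
    f (lfpSet f) ⊆ lfpSet f := by
  apply le_sInf
  intro X hX
  exact (hf (sInf_le hX)).trans hX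

theorem gfpSet_post {V : Type*} {f : Set V → Set V} (hf : Monotone f) :
    gfpSet f ⊆ f (gfpSet f) := by
  apply sSup_le
  intro X hX
  exact le_trans hX (hf (le_sSup hX))

/-- rank functions for least fixed points on finite types -/
theorem lfpSet_rank {V : Type*} [Finite V] {f : Set V → Set V} (hf : Monotone f) :
    ∃ r : V → ℕ, ∀ v ∈ lfpSet f, v ∈ f {w | w ∈ lfpSet f ∧ r w < r v} := by
  classical
  have hmono : Monotone (fun n => f^[n] ∅) := by
    apply monotone_nat_of_le_succ
    intro n
    induction n with
    | zero => simp
    | succ n ih =>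
      rw [Function.iterate_succ_apply', Function.iterate_succ_apply']
      exact hf ih
  have hsub : ∀ n, f^[n] ∅ ⊆ lfpSet f := by
    intro n
    induction n with
    | zero => simp
    | succ n ih =>
      rw [Function.iterate_succ_apply']
      exact (hf ih).trans (lfpSet_pre hf)
  obtain ⟨n, hn⟩ := WellFoundedGT.monotone_chain_condition ⟨_, hmono⟩
  have hfix : lfpSet f ⊆ f^[n] ∅ := by
    apply lfpSet_le_of
    have := hn (n+1) (by omega)
    simp only [OrderHom.coe_mk] at this
    rw [← Function.iterate_succ_apply' f n, ← this]
  have hex : ∀ v ∈ lfpSet f, ∃ n, v ∈ f^[n] ∅ := fun v hv => ⟨n, hfix hv⟩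
  refine ⟨fun v => if h : ∃ n, v ∈ f^[n] ∅ then Nat.find h else 0, ?_⟩
  intro v hv
  have h := hex v hv
  have hs := Nat.find_spec h
  obtain ⟨k, hk⟩ : ∃ k, Nat.find h = k + 1 := by
    rcases hh : Nat.find h with _ | k
    · rw [hh] at hs; simp at hs
    · exact ⟨k, rfl⟩
  rw [hk, Function.iterate_succ_apply'] at hs
  refine hf ?_ hs
  intro w hw
  refine ⟨hsub _ hw, ?_⟩
  have h' : ∃ n, w ∈ f^[n] ∅ := ⟨k, hw⟩
  have : Nat.find h' ≤ k := Nat.find_min' h' hw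
  simp only [h, h', dite_true]
  omega

theorem pref_succ {V : Type*} (π : ℕ → V) (i : ℕ) :
    (List.ofFn fun j : Fin (i+1) => π j.1) = (List.ofFn fun j : Fin i => π j.1) ++ [π i] := by
  rw [List.ofFn_succ']
  simp

theorem pref_length_count {V : Type*} [DecidableEq V] (π : ℕ → V) (v : V) (i : ℕ) :
    List.count v (List.ofFn fun j : Fin i => π j.1) = Nat.count (fun i => π i = v) i := by
  induction i with
  | zero => simp
  | succ i ih =>
    rw [pref_succ, List.count_append, ih, Nat.count_succ]
    simp [List.count_singleton]

namespace LiveGameGraph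

variable {V : Type*} (Gm : LiveGameGraph V)

theorem mem_or (v : V) : v ∈ Gm.V0 ∨ v ∈ Gm.V1 := by
  have : v ∈ Gm.V0 ∪ Gm.V1 := by rw [Gm.cover]; trivial
  exact this

theorem not_both {v : V} (h0 : v ∈ Gm.V0) (h1 : v ∈ Gm.V1) : False := by
  have : v ∈ Gm.V0 ∩ Gm.V1 := ⟨h0, h1⟩
  rw [Gm.disj] at this
  exact this

theorem cpre_mono : Monotone Gm.cpre := by
  rintro S T h v (⟨h0, w, hw, hS⟩ | ⟨h1, hw⟩)
  · exact Or.inl ⟨h0, w, hw, h hS⟩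
  · exact Or.inr ⟨h1, fun w hE => h (hw w hE)⟩

theorem apre_mono {S S' T T' : Set V} (hS : S ⊆ S') (hT : T ⊆ T') :
    Gm.apre S T ⊆ Gm.apre S' T' := by
  rintro v (h | ⟨⟨w, hw, hwT⟩, h1, h⟩)
  · exact Or.inl (Gm.cpre_mono hT h)
  · exact Or.inr ⟨⟨w, hw, hT hwT⟩, h1, fun w hE => hS (h w hE)⟩

/-- the inner map -/
def inner (Q Fb Y X : Set V) : Set V := Q ∩ ((Fb ∩ Gm.cpre Y) ∪ Gm.apre Y X)

theorem inner_mono (Q Fb : Set V) {Y Y' X X' : Set V} (hY : Y ⊆ Y') (hX : X ⊆ X') :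
    Gm.inner Q Fb Y X ⊆ Gm.inner Q Fb Y' X' := by
  rintro v ⟨hQ, ⟨hF, hc⟩ | h⟩
  · exact ⟨hQ, Or.inl ⟨hF, Gm.cpre_mono hY hc⟩⟩
  · exact ⟨hQ, Or.inr (Gm.apre_mono hY hX h)⟩

theorem inner_mono' (Q Fb Y : Set V) : Monotone (Gm.inner Q Fb Y) :=
  fun _ _ h => Gm.inner_mono Q Fb subset_rfl h

/-- the outer map -/
def outer (Q : Set V) (s : ℕ) (F : ℕ → Set V) (Y : Set V) : Set V :=
  ⋂ b ∈ Finset.Icc 1 s, lfpSet (Gm.inner Q (F b) Y)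

theorem outer_mono (Q : Set V) (s : ℕ) (F : ℕ → Set V) : Monotone (Gm.outer Q s F) := by
  intro Y Y' h
  apply Set.iInter₂_mono
  intro b hb
  apply lfpSet_le_of
  exact (Gm.inner_mono Q (F b) h subset_rfl).trans (lfpSet_pre (Gm.inner_mono' Q (F b) Y'))

/-- A path consistent with a Player-0 strategy. -/
def Cons (ρ0 : List V → V → V) (π : ℕ → V) : Prop :=
  ∀ i, Gm.E (π i) (π (i+1)) ∧
    (π i ∈ Gm.V0 → π (i + 1) = ρ0 (List.ofFn fun j : Fin i => π j.1) (π i))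

theorem winsFrom_iff (φ : (ℕ → V) → Prop) (ρ0 : List V → V → V) (v0 : V) :
    Gm.WinsFrom φ ρ0 v0 ↔ Gm.Strategy0 ρ0 ∧
      ∀ π : ℕ → V, π 0 = v0 → Gm.Cons ρ0 π → Gm.StronglyFair π → φ π := by
  classical
  refine and_congr_right fun hs => ⟨?_, ?_⟩
  · intro h π h0 hc hf
    choose nx hnx using Gm.succ_nonempty
    refine h (fun h v => if Gm.E v (π (h.length + 1)) then π (h.length + 1) else nx v) ?_ π
      ⟨h0, fun i => ⟨(hc i).2, fun _ => ?_⟩⟩ hf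
    · intro h v _
      dsimp only
      split_ifs with hh
      · exact hh
      · exact hnx v
    · simp [(hc i).1]
  · intro h ρ1 h1 π hπ hf
    refine h π hπ.1 (fun i => ⟨?_, (hπ.2 i).1⟩) hf
    rcases Gm.mem_or (π i) with h0 | h0
    · rw [(hπ.2 i).1 h0]; exact hs _ _ h0
    · rw [(hπ.2 i).2 h0]; exact h1 _ _ h0

/-- Fair plays exist in every restriction of Player 1's choices that keeps the live edges. -/
theorem exists_fair_play [Finite V] (ρ0 : List V → V → V) (hρ : Gm.Strategy0 ρ0)
    (A : V → V → Prop) (hAE : ∀ v w, A v w → Gm.E v w) (hne : ∀ v ∈ Gm.V1, ∃ w, A v w)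
    (hlive : ∀ v w, Gm.El v w → A v w) (v0 : V) :
    ∃ π : ℕ → V, π 0 = v0 ∧ Gm.Cons ρ0 π ∧ Gm.StronglyFair π ∧
      ∀ i, π i ∈ Gm.V1 → A (π i) (π (i+1)) := by
  classical
  have hen : ∀ v : V, ∃ e : ℕ → V, v ∈ Gm.V1 → (∀ n, A v (e n)) ∧
      ∀ w, A v w → {n | e n = w}.Infinite := by
    intro v
    by_cases hv : v ∈ Gm.V1
    · obtain ⟨w0, hw0⟩ := hne v hv
      haveI : Nonempty {w // A v w} := ⟨⟨w0, hw0⟩⟩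
      obtain ⟨g, hg⟩ := exists_surjective_nat {w // A v w}
      refine ⟨fun n => (g n.unpair.1).1, fun _ => ⟨fun n => (g _).2, ?_⟩⟩
      intro w hw
      obtain ⟨k, hk⟩ := hg ⟨w, hw⟩
      refine Set.infinite_of_injective_forall_mem (f := fun m => Nat.pair k m) ?_ ?_
      · intro a b hab
        have := congrArg Nat.unpair hab
        simpa using this
      · intro m
        simp [hk]
    · exact ⟨fun _ => v, fun h => absurd h hv⟩
  choose e he using hen
  let nxt : List V → V → V := fun h v => if v ∈ Gm.V0 then ρ0 h v else e v (h.count v)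
  let st : ℕ → List V × V := fun n => Nat.rec ([], v0) (fun _ p => (p.1 ++ [p.2], nxt p.1 p.2)) n
  let π : ℕ → V := fun n => (st n).2
  have hst : ∀ n, (st n).1 = List.ofFn fun j : Fin n => π j.1 := by
    intro n
    induction n with
    | zero => simp [st]
    | succ n ih => rw [pref_succ, ← ih]
  have hπ : ∀ n, π (n+1) = nxt (List.ofFn fun j : Fin n => π j.1) (π n) := by
    intro n
    rw [← hst]
  have hA : ∀ i, π i ∈ Gm.V1 → π (i+1) = e (π i) (Nat.count (fun j => π j = π i) i) := by
    intro i hi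
    have : π i ∉ Gm.V0 := fun h => Gm.not_both h hi
    rw [hπ]
    simp only [nxt, this, if_false]
    rw [pref_length_count]
  have hA' : ∀ i, π i ∈ Gm.V1 → A (π i) (π (i+1)) := by
    intro i hi
    rw [hA i hi]
    exact (he _ hi).1 _
  have h0' : ∀ i, π i ∈ Gm.V0 → π (i + 1) = ρ0 (List.ofFn fun j : Fin i => π j.1) (π i) := by
    intro i hi
    rw [hπ]
    simp only [nxt, hi, if_true]
  refine ⟨π, rfl, fun i => ⟨?_, h0' i⟩, ?_, hA'⟩
  · rcases Gm.mem_or (π i) with h0 | h0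
    · rw [h0' i h0]; exact hρ _ _ h0
    · exact hAE _ _ (hA' i h0)
  · intro v w hvw hinf
    have hv := (Gm.live_sub v w hvw).1
    have hw := (he v hv).2 w (hlive v w hvw)
    have hinf' : (setOf fun i => π i = v).Infinite := hinf
    refine (hw.image (f := Nat.nth (fun i => π i = v))
      ((Nat.nth_injective hinf').injOn)).mono ?_
    rintro _ ⟨n, hn, rfl⟩
    have hm : π (Nat.nth (fun i => π i = v) n) = v := Nat.nth_mem_of_infinite hinf' n
    refine ⟨hm, ?_⟩
    rw [hA _ (by rw [hm]; exact hv), hm, Nat.count_nth_of_infinite hinf']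
    exact hn

theorem stronglyFair_cons (v : V) (π : ℕ → V) (h : Gm.StronglyFair π) :
    Gm.StronglyFair (fun n => Nat.casesOn n v π) := by
  intro a b hab hinf
  have h1 : {i | π i = a}.Infinite := by
    intro hfin
    apply hinf
    refine ((hfin.image Nat.succ).union (Set.finite_singleton 0)).subset ?_
    rintro (_ | i) hi
    · right; rfl
    · left; exact ⟨i, hi, rfl⟩
  refine ((h a b hab h1).image (f := Nat.succ) Nat.succ_injective.injOn).mono ?_
  rintro _ ⟨i, hi, rfl⟩
  exact hi

theorem winsFrom_step (φ : (ℕ → V) → Prop) (hφ : ∀ v π, φ (fun n => Nat.casesOn n v π) → φ π)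
    (ρ0 : List V → V → V) (v w : V) (h : Gm.WinsFrom φ ρ0 v) (hE : Gm.E v w)
    (h0 : v ∈ Gm.V0 → w = ρ0 [] v) : Gm.WinsFrom φ (fun h u => ρ0 (v :: h) u) w := by
  rw [winsFrom_iff] at h ⊢
  refine ⟨fun l u hu => h.1 _ _ hu, fun π hπ hc hf => ?_⟩
  apply hφ v
  refine h.2 _ rfl ?_ (Gm.stronglyFair_cons v π hf)
  rintro (_ | i)
  · subst hπ
    exact ⟨hE, fun hv => by simpa using h0 hv⟩
  · refine ⟨(hc i).1, fun hi => ?_⟩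
    have := (hc i).2 hi
    simp only [List.ofFn_succ]
    exact this

theorem winsFrom_iter (φ : (ℕ → V) → Prop) (hφ : ∀ v π, φ (fun n => Nat.casesOn n v π) → φ π)
    (ρ0 : List V → V → V) (π : ℕ → V) (h : Gm.WinsFrom φ ρ0 (π 0)) (hc : Gm.Cons ρ0 π) (i : ℕ) :
    Gm.WinsFrom φ (fun h u => ρ0 ((List.ofFn fun j : Fin i => π j.1) ++ h) u) (π i) := by
  induction i with
  | zero => simpa using h
  | succ i ih =>
    have := Gm.winsFrom_step φ hφ _ _ (π (i+1)) ih (hc i).1 (by simpa using (hc i).2)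
    simpa only [pref_succ, List.append_assoc, List.singleton_append] using this

/-- Completeness: the winning region is a post-fixed point. -/
theorem winning_post [Finite V] (Q : Set V) (s : ℕ) (F : ℕ → Set V) (W : Set V)
    (hW : W = Gm.WinningRegion
        (fun π => (∀ i, π i ∈ Q) ∧ ∀ b ∈ Finset.Icc 1 s, ∀ N, ∃ i ≥ N, π i ∈ F b)) :
    W ⊆ Gm.outer Q s F W := by
  set φ : (ℕ → V) → Prop :=
    (fun π => (∀ i, π i ∈ Q) ∧ ∀ b ∈ Finset.Icc 1 s, ∀ N, ∃ i ≥ N, π i ∈ F b) with hφd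
  have hφ : ∀ v π, φ (fun n => Nat.casesOn n v π) → φ π := by
    rintro v π ⟨h1, h2⟩
    refine ⟨fun i => h1 (i+1), fun b hb N => ?_⟩
    obtain ⟨i, hi, hF⟩ := h2 b hb (N+1)
    rcases i with _ | i
    · omega
    · exact ⟨i, by omega, hF⟩
  have hWQ : W ⊆ Q := by
    intro v hv
    rw [hW] at hv
    obtain ⟨ρ0, hρ⟩ := hv
    rw [winsFrom_iff] at hρ
    obtain ⟨π, h0, hc, hf, -⟩ := Gm.exists_fair_play ρ0 hρ.1 Gm.E (fun _ _ h => h)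
      (fun v _ => Gm.succ_nonempty v) (fun v w h => (Gm.live_sub v w h).2) v
    have := (hρ.2 π h0 hc hf).1 0
    rwa [h0] at this
  have hWC : W ⊆ Gm.cpre W := by
    intro v hv
    rw [hW] at hv
    obtain ⟨ρ0, hρ⟩ := hv
    rcases Gm.mem_or v with h0 | h1
    · left
      refine ⟨h0, ρ0 [] v, hρ.1 _ _ h0, ?_⟩
      rw [hW]
      exact ⟨_, Gm.winsFrom_step φ hφ ρ0 v _ hρ (hρ.1 _ _ h0) (fun _ => rfl)⟩
    · right
      refine ⟨h1, fun w hE => ?_⟩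
      rw [hW]
      exact ⟨_, Gm.winsFrom_step φ hφ ρ0 v _ hρ hE (fun h0 => (Gm.not_both h0 h1).elim)⟩
  intro v hv
  simp only [outer, Set.mem_iInter]
  intro b hb
  by_contra hvX
  set X := lfpSet (Gm.inner Q (F b) W) with hX
  have hpre : Gm.inner Q (F b) W X ⊆ X := lfpSet_pre (Gm.inner_mono' Q (F b) W)
  have hnF : ∀ u, u ∈ W → u ∉ X → u ∉ F b := fun u hu hX hF =>
    hX (hpre ⟨hWQ hu, Or.inl ⟨hF, hWC hu⟩⟩)
  have hnA : ∀ u, u ∈ W → u ∉ X → u ∉ Gm.apre W X := fun u hu hX hF =>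
    hX (hpre ⟨hWQ hu, Or.inr hF⟩)
  have hv' := hv
  rw [hW] at hv'
  obtain ⟨ρ0, hρ⟩ := hv'
  obtain ⟨π, h0, hc, hf, hA⟩ := Gm.exists_fair_play ρ0 hρ.1
    (fun u w => Gm.E u w ∧ (u ∈ W → u ∉ X → w ∉ X)) (fun _ _ h => h.1) (by
      intro u hu
      by_cases hh : u ∈ W ∧ u ∉ X
      · have := hnA u hh.1 hh.2
        by_contra hcon
        push Not at hcon
        apply this
        left; right
        refine ⟨hu, fun w hw => ?_⟩
        by_contra hwX
        exact hwX (hcon w hw).2.2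
      · obtain ⟨w, hw⟩ := Gm.succ_nonempty u
        exact ⟨w, hw, fun h1 h2 => (hh ⟨h1, h2⟩).elim⟩) (by
      intro u w huw
      refine ⟨(Gm.live_sub u w huw).2, fun huW huX hwX => hnA u huW huX (Or.inr ⟨⟨w, huw, hwX⟩, ?_⟩)⟩
      rcases hWC huW with h | h
      · exact (Gm.not_both h.1 (Gm.live_sub u w huw).1).elim
      · exact h) v
  have hπW : ∀ i, π i ∈ W := by
    intro i
    rw [hW]
    exact ⟨_, Gm.winsFrom_iter φ hφ ρ0 π (by rw [h0]; exact hρ) hc i⟩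
  have hπX : ∀ i, π i ∉ X := by
    intro i
    induction i with
    | zero => rwa [h0]
    | succ i ih =>
      rcases Gm.mem_or (π i) with hi | hi
      · intro hX'
        exact hnA _ (hπW i) ih (Or.inl (Or.inl ⟨hi, _, (hc i).1, hX'⟩))
      · exact (hA i hi).2 (hπW i) ih
  obtain ⟨i, -, hi⟩ := (((Gm.winsFrom_iff φ ρ0 v).1 hρ).2 π h0 hc hf).2 b hb 0
  exact hnF _ (hπW i) (hπX i) hi

/-- Soundness core: pursuing one goal set forever along a fair play must hit it. -/
theorem eventually_hit [Finite V] (Z Fb : Set V) (r : V → ℕ) (π : ℕ → V)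
    (hf : Gm.StronglyFair π) (hZ : ∀ i, π i ∈ Z) (hE : ∀ i, Gm.E (π i) (π (i+1)))
    (hr : ∀ v ∈ Z, v ∉ Fb → v ∈ Gm.apre Z {w | w ∈ Z ∧ r w < r v}) (N : ℕ)
    (h0 : ∀ i ≥ N, π i ∈ Gm.V0 → π i ∉ Fb → r (π (i+1)) < r (π i)) :
    ∃ i ≥ N, π i ∈ Fb := by
  by_contra hcon
  push Not at hcon
  have key : ∀ k, {i | r (π i) < k}.Finite := by
    intro k
    induction k with
    | zero => simp
    | succ k ih =>
      by_contra hinf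
      have hinf : {i | r (π i) < k + 1}.Infinite := hinf
      have h1 : {i | r (π i) = k}.Infinite := by
        intro hfin
        apply hinf
        refine (ih.union hfin).subset ?_
        intro i hi
        simp only [Set.mem_setOf_eq, Set.mem_union] at hi ⊢
        omega
      obtain ⟨v, hv, hvinf⟩ : ∃ v, r v = k ∧ {i | π i = v}.Infinite := by
        by_contra hno
        push Not at hno
        apply h1
        refine (Set.Finite.biUnion (Set.toFinite {v | r v = k})
          (fun v hv => hno v hv)).subset ?_
        intro i hi
        simp only [Set.mem_iUnion]
        exact ⟨π i, hi, rfl⟩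
      have h2 : {i | N ≤ i ∧ π i = v}.Infinite := by
        intro hfin
        apply hvinf
        refine (hfin.union (Set.finite_lt_nat N)).subset ?_
        intro i hi
        by_cases hN : N ≤ i
        · left; exact ⟨hN, hi⟩
        · right; simpa using hN
      have h3 : {i | r (π (i+1)) < k}.Infinite := by
        obtain ⟨i0, hi0, hiv⟩ := h2.nonempty
        have hvF : v ∉ Fb := by rw [← hiv]; exact hcon i0 hi0
        have hvZ : v ∈ Z := by rw [← hiv]; exact hZ i0
        rcases hr v hvZ hvF with (hc | hc) | ⟨⟨w, hw, hwr⟩, -⟩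
        · refine h2.mono ?_
          rintro i ⟨hi, rfl⟩
          have := h0 i hi hc.1 hvF
          simp only [Set.mem_setOf_eq]; omega
        · refine h2.mono ?_
          rintro i ⟨hi, rfl⟩
          have := (hc.2 _ (hE i)).2
          simp only [Set.mem_setOf_eq]; omega
        · refine (hf v w hw hvinf).mono ?_
          rintro i ⟨hi, hiw⟩
          have := hwr.2
          simp only [Set.mem_setOf_eq, hiw]; omega
      refine (h3.image (f := Nat.succ) Nat.succ_injective.injOn).mono ?_ ih
      rintro _ ⟨i, hi, rfl⟩
      exact hi
  obtain ⟨K, hK⟩ := (Set.finite_range r).bddAbove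
  refine Set.infinite_univ (α := ℕ) ((key (K+1)).subset ?_)
  intro i _
  have := hK ⟨π i, rfl⟩
  simp only [Set.mem_setOf_eq]; omega

theorem sound [Finite V] (Q : Set V) (t : ℕ) (F : ℕ → Set V) (Z : Set V)
    (hZ : Z = Gm.outer Q (t+1) F Z) :
    ∃ (upd : Fin (t+1) → V → Fin (t+1)) (c : Fin (t+1) → V → V),
      (∀ m v, v ∈ Gm.V0 → Gm.E v (c m v)) ∧
      ∀ v0 ∈ Z,
        Gm.WinsFrom
          (fun π => (∀ i, π i ∈ Q) ∧ ∀ b ∈ Finset.Icc 1 (t+1), ∀ N, ∃ i ≥ N, π i ∈ F b)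
          (fun h v => c (List.foldl upd 0 h) v) v0 := by
  classical
  have hsub : ∀ b ∈ Finset.Icc 1 (t+1), Z ⊆ lfpSet (Gm.inner Q (F b) Z) := by
    intro b hb v hv
    rw [hZ] at hv
    simp only [outer, Set.mem_iInter] at hv
    exact hv b hb
  have hle : ∀ b ∈ Finset.Icc 1 (t+1), lfpSet (Gm.inner Q (F b) Z) ⊆ Z := by
    intro b hb v hv
    rw [hZ]
    simp only [outer, Set.mem_iInter]
    intro d hd
    revert v
    apply lfpSet_le_of
    rintro v ⟨hQ, ⟨-, hc⟩ | ha⟩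
    · exact lfpSet_pre (Gm.inner_mono' Q (F d) Z)
        ⟨hQ, Or.inr (Or.inl (Gm.cpre_mono (hsub d hd) hc))⟩
    · exact lfpSet_pre (Gm.inner_mono' Q (F d) Z) ⟨hQ, Or.inr ha⟩
  have hX : ∀ b ∈ Finset.Icc 1 (t+1), lfpSet (Gm.inner Q (F b) Z) = Z :=
    fun b hb => (hle b hb).antisymm (hsub b hb)
  have hrank := fun b => lfpSet_rank (Gm.inner_mono' Q (F b) Z)
  choose r hr0 using hrank
  have hr : ∀ b ∈ Finset.Icc 1 (t+1), ∀ v ∈ Z, v ∈ Q ∧ v ∈ Gm.cpre Z ∧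
      (v ∉ F b → v ∈ Gm.apre Z {w | w ∈ Z ∧ r b w < r b v}) := by
    intro b hb v hv
    have := hr0 b v (by rw [hX b hb]; exact hv)
    rw [hX b hb] at this
    obtain ⟨hQ, ⟨hF, hc⟩ | ha⟩ := this
    · exact ⟨hQ, hc, fun h => (h hF).elim⟩
    · refine ⟨hQ, ?_, fun _ => ha⟩
      rcases ha with h | h
      · exact Gm.cpre_mono (fun w hw => hw.1) h
      · exact Or.inr h.2
  have hmem : ∀ m : Fin (t+1), m.val + 1 ∈ Finset.Icc 1 (t+1) := by
    intro m
    have := m.isLt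
    simp only [Finset.mem_Icc]; omega
  have hcex : ∀ (m : Fin (t+1)) (v : V), ∃ w, v ∈ Gm.V0 → Gm.E v w ∧
      (v ∈ Z → w ∈ Z ∧ (v ∉ F (m.val+1) → r (m.val+1) w < r (m.val+1) v)) := by
    intro m v
    by_cases hvZ : v ∈ Z
    · obtain ⟨-, hc, ha⟩ := hr _ (hmem m) v hvZ
      by_cases hF : v ∈ F (m.val+1)
      · rcases hc with ⟨-, w, hw, hwZ⟩ | ⟨h1, -⟩
        · exact ⟨w, fun _ => ⟨hw, fun _ => ⟨hwZ, fun h => (h hF).elim⟩⟩⟩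
        · exact ⟨v, fun h0 => (Gm.not_both h0 h1).elim⟩
      · rcases ha hF with (⟨-, w, hw, hwZ⟩ | ⟨h1, -⟩) | ⟨-, h1, -⟩
        · exact ⟨w, fun _ => ⟨hw, fun _ => ⟨hwZ.1, fun _ => hwZ.2⟩⟩⟩
        · exact ⟨v, fun h0 => (Gm.not_both h0 h1).elim⟩
        · exact ⟨v, fun h0 => (Gm.not_both h0 h1).elim⟩
    · obtain ⟨w, hw⟩ := Gm.succ_nonempty v
      exact ⟨w, fun _ => ⟨hw, fun h => (hvZ h).elim⟩⟩
  choose c hc using hcex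
  refine ⟨fun m v => if v ∈ F (m.val+1) then m + 1 else m, c, fun m v h0 => (hc m v h0).1, ?_⟩
  set upd : Fin (t+1) → V → Fin (t+1) := fun m v => if v ∈ F (m.val+1) then m + 1 else m with hupd
  intro v0 hv0
  rw [winsFrom_iff]
  refine ⟨fun h v h0 => (hc _ v h0).1, ?_⟩
  intro π hπ0 hcons hf
  obtain ⟨m, hm⟩ : ∃ m : ℕ → Fin (t+1),
      m = fun i => List.foldl upd 0 (List.ofFn fun j : Fin i => π j.1) := ⟨_, rfl⟩
  have hms : ∀ i, m (i+1) = upd (m i) (π i) := by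
    intro i
    simp only [hm]
    rw [pref_succ, List.foldl_append]
    rfl
  have hstep : ∀ i, π i ∈ Gm.V0 → π (i+1) = c (m i) (π i) := by
    intro i hi
    rw [hm]
    exact (hcons i).2 hi
  have hπZ : ∀ i, π i ∈ Z := by
    intro i
    induction i with
    | zero => rwa [hπ0]
    | succ i ih =>
      rcases Gm.mem_or (π i) with h0 | h1
      · rw [hstep i h0]
        exact ((hc _ _ h0).2 ih).1
      · rcases (hr _ (hmem 0) _ ih).2.1 with h | h
        · exact (Gm.not_both h.1 h1).elim
        · exact h.2 _ (hcons i).1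
  -- the current target is eventually hit, with the memory unchanged until then
  have hhit : ∀ i, ∃ j ≥ i, m j = m i ∧ π j ∈ F ((m i).val + 1) := by
    intro i
    by_contra hcon
    push Not at hcon
    have hconst : ∀ d, m (i+d) = m i := by
      intro d
      induction d with
      | zero => rfl
      | succ d ih =>
        have h1 := hcon (i+d) (by omega) ih
        rw [← add_assoc, hms, ih]
        simp [hupd, h1]
    have hconst' : ∀ j ≥ i, m j = m i := by
      intro j hj
      obtain ⟨d, rfl⟩ := Nat.exists_eq_add_of_le hj
      exact hconst d
    obtain ⟨j, hj, hF⟩ := Gm.eventually_hit Z (F ((m i).val+1)) (r ((m i).val+1)) π hf hπZ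
      (fun j => (hcons j).1) (fun v hv => (hr _ (hmem (m i)) v hv).2.2) i (by
        intro j hj h0 hF
        have := ((hc (m i) _ h0).2 (hπZ j)).2 hF
        rwa [← hconst' j hj, ← hstep j h0, hconst' j hj] at this)
    exact hcon j hj (hconst' j hj) hF
  have hreach : ∀ d i : ℕ, ∃ j ≥ i, (m j).val = ((m i).val + d) % (t+1) := by
    intro d
    induction d with
    | zero => intro i; exact ⟨i, le_rfl, by simp [Nat.mod_eq_of_lt (m i).isLt]⟩
    | succ d ih =>
      intro i
      obtain ⟨j, hj, hmj⟩ := ih i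
      obtain ⟨k, hk, hmk, hF⟩ := hhit j
      refine ⟨k+1, by omega, ?_⟩
      rw [hms, hmk]
      simp only [hupd, hF, if_true]
      rw [Fin.val_add, hmj, Fin.val_one', ← Nat.add_mod, add_assoc]
  refine ⟨fun i => (hr _ (hmem 0) _ (hπZ i)).1, ?_⟩
  intro b hb N
  rw [Finset.mem_Icc] at hb
  let B : Fin (t+1) := ⟨b - 1, by omega⟩
  obtain ⟨j, hj, hmj⟩ := hreach (b - 1 + (t + 1) - (m N).val) N
  have hmB : m j = B := by
    apply Fin.ext
    have hlt := (m N).isLt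
    have he : (m N).val + (b - 1 + (t + 1) - (m N).val) = (b - 1) + (t + 1) := by omega
    rw [hmj, he, Nat.add_mod_right]
    exact Nat.mod_eq_of_lt (by omega)
  obtain ⟨k, hk, -, hF⟩ := hhit j
  refine ⟨k, by omega, ?_⟩
  rw [hmB] at hF
  have : B.val + 1 = b := by simp only [B]; omega
  rwa [this] at hF

end LiveGameGraph

/-- the fixpoint νY. ⋂_{b=1}^s μX_b. (Q ∩ [(F_b ∩ Cpre(Y)) ∪ Apre(Y,X_b)])
equals the winning region of Player 0 in the fair adversarial game for the
safe generalized Büchi condition □Q ∧ ⋀_b □◇F_b, and a finite-memory winning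
Player-0 strategy exists on it. -/
theorem fair_adversarial_safe_gen_buchi {V : Type*} [Fintype V]
    (Gm : LiveGameGraph V) (Q : Set V) (s : ℕ) (hs : 1 ≤ s) (F : ℕ → Set V)
    (Zstar : Set V)
    (hZ : Zstar = gfpSet fun Y => ⋂ b ∈ Finset.Icc 1 s, lfpSet fun X =>
      Q ∩ ((F b ∩ Gm.cpre Y) ∪ Gm.apre Y X)) :
    Zstar = Gm.WinningRegion
        (fun π => (∀ i, π i ∈ Q) ∧ ∀ b ∈ Finset.Icc 1 s, ∀ N, ∃ i ≥ N, π i ∈ F b) ∧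
    ∃ (M : Type) (_ : Fintype M) (m0 : M) (upd : M → V → M) (c : M → V → V),
      (∀ m v, v ∈ Gm.V0 → Gm.E v (c m v)) ∧
      ∀ v0 ∈ Zstar,
        Gm.WinsFrom
          (fun π => (∀ i, π i ∈ Q) ∧ ∀ b ∈ Finset.Icc 1 s, ∀ N, ∃ i ≥ N, π i ∈ F b)
          (fun h v => c (List.foldl upd m0 h) v) v0 := by
  have hZ' : Zstar = gfpSet (Gm.outer Q s F) := hZ
  have hpost : Zstar ⊆ Gm.outer Q s F Zstar := by
    rw [hZ']; exact gfpSet_post (Gm.outer_mono Q s F)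
  have hfix : Zstar = Gm.outer Q s F Zstar := by
    refine hpost.antisymm ?_
    have : Gm.outer Q s F Zstar ≤ gfpSet (Gm.outer Q s F) :=
      le_sSup (Gm.outer_mono Q s F hpost)
    rwa [← hZ'] at this
  obtain ⟨t, rfl⟩ : ∃ t, s = t + 1 := ⟨s - 1, by omega⟩
  obtain ⟨upd, c, hc, hwin⟩ := Gm.sound Q t F Zstar hfix
  refine ⟨?_, Fin (t+1), inferInstance, 0, upd, c, hc, hwin⟩
  apply Set.Subset.antisymm
  · intro v hv
    exact ⟨_, hwin v hv⟩
  · rw [hZ']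
    exact le_sSup (Gm.winning_post Q (t+1) F _ rfl)
end

section
/- Let ⟨G, Eℓ⟩ be a two-player game graph with live edges, Q ⊆ V, and F = {F_1, …, F_s} a family of subsets of V, and let Z* := νY. ⋂_{b=1}^{s} μ X_b. ( Q ∩ [ (F_b ∩ Cpre(Y)) ∪ Apre(Y, X_b) ] ). Then for every b ∈ {1, …, s}, the least fixed point lfp( X ↦ Q ∩ [ (F_b ∩ Cpre(Z*)) ∪ Apre(Z*, X) ] ) equals Z*. -/
/-- for every b, lfp(X ↦ Q ∩ [(F_b ∩ Cpre(Z*)) ∪ Apre(Z*,X)]) = Z*. -/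
theorem gen_buchi_inner_lfp_eq {V : Type*} [Fintype V]
    (Gm : LiveGameGraph V) (Q : Set V) (s : ℕ) (F : ℕ → Set V) (Zstar : Set V)
    (hZ : Zstar = gfpSet fun Y => ⋂ b ∈ Finset.Icc 1 s, lfpSet fun X =>
      Q ∩ ((F b ∩ Gm.cpre Y) ∪ Gm.apre Y X)) :
    ∀ b ∈ Finset.Icc 1 s,
      lfpSet (fun X => Q ∩ ((F b ∩ Gm.cpre Zstar) ∪ Gm.apre Zstar X)) = Zstar := by
  have cm : ∀ {A B : Set V}, A ⊆ B → Gm.cpre A ⊆ Gm.cpre B := by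
    rintro A B h v (⟨h0, w, hw, hA⟩ | ⟨h1, hA⟩)
    · exact Or.inl ⟨h0, w, hw, h hA⟩
    · exact Or.inr ⟨h1, fun w hw => h (hA w hw)⟩
  have am : ∀ {A B C D : Set V}, A ⊆ B → C ⊆ D → Gm.apre A C ⊆ Gm.apre B D := by
    rintro A B C D h k v (hv | ⟨⟨w, hw, hC⟩, h1, hA⟩)
    · exact Or.inl (cm k hv)
    · exact Or.inr ⟨⟨w, hw, k hC⟩, h1, fun w hw => h (hA w hw)⟩
  have aZ : Gm.apre Zstar Zstar ⊆ Gm.cpre Zstar := by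
    rintro v (hv | ⟨-, hv⟩)
    · exact hv
    · exact Or.inr hv
  have lm : ∀ (b : ℕ) {A B : Set V}, A ⊆ B →
      lfpSet (fun X => Q ∩ ((F b ∩ Gm.cpre A) ∪ Gm.apre A X)) ⊆
      lfpSet (fun X => Q ∩ ((F b ∩ Gm.cpre B) ∪ Gm.apre B X)) := by
    intro b A B h v hv X hX
    refine hv X (fun u hu => hX ⟨hu.1, ?_⟩)
    rcases hu.2 with hu | hu
    · exact Or.inl ⟨hu.1, cm h hu.2⟩
    · exact Or.inr (am h subset_rfl hu)
  have post : ∀ b ∈ Finset.Icc 1 s, Zstar ⊆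
      lfpSet (fun X => Q ∩ ((F b ∩ Gm.cpre Zstar) ∪ Gm.apre Zstar X)) := by
    intro b hb v hv
    have hv' := hv
    rw [hZ] at hv'
    obtain ⟨Y, hY, hvY⟩ := hv'
    have hYZ : Y ⊆ Zstar := by
      rw [hZ]
      exact fun u hu => ⟨Y, hY, hu⟩
    exact lm b hYZ (Set.mem_iInter₂.1 (hY hvY) b hb)
  have key : Q ∩ Gm.cpre Zstar ⊆ Zstar := by
    have hW : Zstar ∪ (Q ∩ Gm.cpre Zstar) ⊆ Zstar := by
      intro v hv
      rw [hZ]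
      refine ⟨Zstar ∪ (Q ∩ Gm.cpre Zstar), ?_, hv⟩
      intro u hu
      refine Set.mem_iInter₂.2 (fun b hb => ?_)
      have hsub := (post b hb).trans (lm b (Set.subset_union_left (t := Q ∩ Gm.cpre Zstar)))
      rcases hu with hu | hu
      · exact hsub hu
      · intro X hX
        refine hX ⟨hu.1, Or.inr (Or.inl (cm ?_ hu.2))⟩
        exact fun w hw => hsub hw X hX
    exact Set.subset_union_right.trans hW
  intro b hb
  refine Set.Subset.antisymm ?_ (post b hb)
  intro v hv
  refine hv Zstar ?_
  rintro u ⟨hQ, hu | hu⟩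
  · exact key ⟨hQ, hu.2⟩
  · exact key ⟨hQ, aZ hu⟩
end

section
/- Let ⟨G, Eℓ⟩ be a two-player game graph with live edges and let R̃ = {(𝐆_1, R_1), …, (𝐆_k, R_k)} be a generalized Rabin condition with index set P = {1, …, k}, where 𝐆_j = {G_j^1, …, G_j^{m_j}} with G_j^l ⊆ V. With p_0 := 0, l_0 := 1, G_{p_0}^{1} := ∅ and R_{p_0} := ∅, define Z* := νY_{p_0}. μX_{p_0}. ⋃_{p_1 ∈ P} νY_{p_1}. ⋂_{l_1 ∈ [1;m_{p_1}]} μ X_{p_1}^{l_1}. ⋯ ⋃_{p_k ∈ P∖{p_1,…,p_{k−1}}} νY_{p_k}. ⋂_{l_k ∈ [1;m_{p_k}]} μ X_{p_k}^{l_k}. ⋃_{j=0}^{k} C_{p_j}^{l_j}, where C_{p_j}^{l_j} := ( ⋂_{i=0}^{j} (V ∖ R_{p_i}) ) ∩ [ (G_{p_j}^{l_j} ∩ Cpre(Y_{p_j})) ∪ Apre(Y_{p_j}, X_{p_j}^{l_j}) ], with X_{p_0}^{1} := X_{p_0}. Then Z* equals the winning region W of Player 0 in the fair adversarial game over ⟨G,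 Eℓ⟩ for the generalized Rabin winning condition φ = ⋁_{j∈P} ( ◇□(V∖R_j) ∧ ⋀_{l∈[1;m_j]} □◇G_j^l ). Moreover, there exists a finite-memory Player-0 strategy that wins the fair adversarial game for φ from every vertex of Z*. -/
namespace LiveGameGraph

variable {V : Type*}

/-- The nested permutation-based generalized Rabin fixpoint.  `Gs p l` is the
`l`-th goal set of pair `p` (for `l ∈ [1;m p]`), `Rp p` the corresponding
co-safety set.  `avail`, `Qcur` and `acc` are as in the plain Rabin fixpoint. -/
def genRabinAux (Gm : LiveGameGraph V) (Gs : ℕ → ℕ → Set V) (Rp : ℕ → Set V)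
    (m : ℕ → ℕ) : ℕ → Finset ℕ → Set V → Set V → Set V
  | 0, _, _, acc => acc
  | n + 1, avail, Qcur, acc =>
      ⋃ p ∈ avail,
        gfpSet fun Y => ⋂ l ∈ Finset.Icc 1 (m p), lfpSet fun X =>
          Gm.genRabinAux Gs Rp m n (avail.erase p) (Qcur ∩ (Rp p)ᶜ)
            (acc ∪ ((Qcur ∩ (Rp p)ᶜ) ∩ ((Gs p l ∩ Gm.cpre Y) ∪ Gm.apre Y X)))

/-- The full permutation-based generalized Rabin fixpoint Z*, with the artificial
pair p_0 = 0, l_0 = 1, G_0^1 = ∅, R_0 = ∅ handled by the outermost νY_0. μX_0. -/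
def genRabinZ (Gm : LiveGameGraph V) (Gs : ℕ → ℕ → Set V) (Rp : ℕ → Set V)
    (m : ℕ → ℕ) (k : ℕ) : Set V :=
  gfpSet fun Y0 => lfpSet fun X0 =>
    Gm.genRabinAux Gs Rp m k (Finset.Icc 1 k) ((∅ : Set V)ᶜ)
      (((∅ : Set V)ᶜ) ∩ (((∅ : Set V) ∩ Gm.cpre Y0) ∪ Gm.apre Y0 X0))

end LiveGameGraph


section Basics

variable {V : Type*}

theorem gr_lfp_le {f : Set V → Set V} {X : Set V} (h : f X ⊆ X) : lfpSet f ⊆ X :=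
  sInf_le h

theorem gr_le_gfp {f : Set V → Set V} {X : Set V} (h : X ⊆ f X) : X ⊆ gfpSet f :=
  le_sSup (a := X) h

theorem gr_lfp_fix {f : Set V → Set V} (hf : Monotone f) : f (lfpSet f) = lfpSet f :=
  OrderHom.map_lfp ⟨f, hf⟩

theorem gr_gfp_fix {f : Set V → Set V} (hf : Monotone f) : f (gfpSet f) = gfpSet f :=
  OrderHom.map_gfp ⟨f, hf⟩

theorem gr_lfp_mono {f g : Set V → Set V} (h : ∀ X, f X ⊆ g X) : lfpSet f ⊆ lfpSet g :=
  sInf_le_sInf fun X hX => (h X).trans hX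

theorem gr_gfp_mono {f g : Set V → Set V} (h : ∀ X, f X ⊆ g X) : gfpSet f ⊆ gfpSet g :=
  sSup_le_sSup fun X hX => Set.Subset.trans hX (h X)

/-- In a finite lattice the least fixed point is reached by iterating from the empty set. -/
theorem gr_lfp_iter [Finite V] {f : Set V → Set V} (hf : Monotone f) {v : V}
    (hv : v ∈ lfpSet f) : ∃ n, v ∈ f^[n] ∅ := by
  have hmono : Monotone fun n => f^[n] (∅ : Set V) :=
    hf.monotone_iterate_of_le_map (Set.empty_subset _)
  obtain ⟨n, hn⟩ := WellFoundedGT.monotone_chain_condition (⟨_, hmono⟩ : ℕ →o Set V)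
  refine ⟨n, gr_lfp_le ?_ hv⟩
  have := hn (n+1) (Nat.le_succ n)
  simp only [OrderHom.coe_mk] at this
  rw [← Function.iterate_succ_apply' f, ← this]

namespace LiveGameGraph

variable (Gm : LiveGameGraph V)

theorem gr_cpre_mono {S T : Set V} (h : S ⊆ T) : Gm.cpre S ⊆ Gm.cpre T := by
  rintro v (⟨h0, w, hw, hS⟩ | ⟨h1, h2⟩)
  · exact Or.inl ⟨h0, w, hw, h hS⟩
  · exact Or.inr ⟨h1, fun w hw => h (h2 w hw)⟩

theorem gr_apre_mono {S T S' T' : Set V} (h : S ⊆ S') (h' : T ⊆ T') :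
    Gm.apre S T ⊆ Gm.apre S' T' := by
  rintro v (hv | ⟨⟨w, hl, hw⟩, h1, h2⟩)
  · exact Or.inl (Gm.gr_cpre_mono h' hv)
  · exact Or.inr ⟨⟨w, hl, h' hw⟩, h1, fun w hw => h (h2 w hw)⟩

theorem gr_apre_sub {S T : Set V} (h : T ⊆ S) : Gm.apre S T ⊆ Gm.cpre S := by
  rintro v (hv | ⟨_, hv⟩)
  · exact Gm.gr_cpre_mono h hv
  · exact Or.inr hv

/-- The new accumulated target at a level. -/
def grA (Q : Set V) (G acc Y X : Set V) : Set V :=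
  acc ∪ (Q ∩ ((G ∩ Gm.cpre Y) ∪ Gm.apre Y X))

theorem gr_A_mono {Q G acc Y X acc' Y' X' : Set V} (h1 : acc ⊆ acc') (h2 : Y ⊆ Y')
    (h3 : X ⊆ X') : Gm.grA Q G acc Y X ⊆ Gm.grA Q G acc' Y' X' := by
  rintro v (hv | ⟨hq, ⟨hg, hv⟩ | hv⟩)
  · exact Or.inl (h1 hv)
  · exact Or.inr ⟨hq, Or.inl ⟨hg, Gm.gr_cpre_mono h2 hv⟩⟩
  · exact Or.inr ⟨hq, Or.inr (Gm.gr_apre_mono h2 h3 hv)⟩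

/-- One level `νY. ⋂ l, μX. Φ (acc ∪ C)`. -/
def grLev (Φ : Set V → Set V) (Q : Set V) (G : ℕ → Set V) (m : ℕ) (acc : Set V) : Set V :=
  gfpSet fun Y => ⋂ l ∈ Finset.Icc 1 m, lfpSet fun X => Φ (Gm.grA Q (G l) acc Y X)

/-- Basic structural properties of an operator. -/
structure GrOp (Φ : Set V → Set V) (Q : Set V) : Prop where
  mono : Monotone Φ
  infl : ∀ A, A ⊆ Φ A
  stay : ∀ A, Φ A ⊆ A ∪ (Q ∩ Gm.cpre (Φ A))

variable {Gm}

section level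

variable {Φ : Set V → Set V} {Q : Set V} (G : ℕ → Set V) (m : ℕ)

theorem GrOp.inner_mono (hΦ : Gm.GrOp Φ Q) (acc Y : Set V) (l : ℕ) :
    Monotone fun X => Φ (Gm.grA Q (G l) acc Y X) :=
  fun _ _ h => hΦ.mono (Gm.gr_A_mono subset_rfl subset_rfl h)

theorem GrOp.outer_mono (hΦ : Gm.GrOp Φ Q) (acc : Set V) :
    Monotone fun Y => ⋂ l ∈ Finset.Icc 1 m, lfpSet fun X => Φ (Gm.grA Q (G l) acc Y X) :=
  fun _ _ h => Set.iInter₂_mono fun _ _ => gr_lfp_mono fun _ =>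
    hΦ.mono (Gm.gr_A_mono subset_rfl h subset_rfl)

theorem GrOp.lev_sub (hΦ : Gm.GrOp Φ Q) (acc : Set V) {l : ℕ} (hl : l ∈ Finset.Icc 1 m) :
    Gm.grLev Φ Q G m acc ⊆ lfpSet fun X => Φ (Gm.grA Q (G l) acc (Gm.grLev Φ Q G m acc) X) := by
  have := gr_gfp_fix (hΦ.outer_mono G m acc)
  intro v hv
  unfold grLev at hv
  rw [← this] at hv
  exact Set.mem_iInter₂.1 hv l hl

theorem GrOp.F_lev_sub (hΦ : Gm.GrOp Φ Q) (acc : Set V) (l : ℕ) :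
    Φ (Gm.grA Q (G l) acc (Gm.grLev Φ Q G m acc) (Gm.grLev Φ Q G m acc)) ⊆
      Gm.grLev Φ Q G m acc := by
  have hfix := gr_gfp_fix (hΦ.outer_mono G m acc)
  intro v hv
  unfold grLev
  rw [← hfix]
  refine Set.mem_iInter₂.2 fun l' hl' => ?_
  change v ∈ lfpSet fun X => Φ (Gm.grA Q (G l') acc (Gm.grLev Φ Q G m acc) X)
  rw [← gr_lfp_fix (hΦ.inner_mono G acc _ l')]
  refine hΦ.mono ?_ hv
  rintro u (hu | ⟨hq, hu⟩)
  · exact Or.inl hu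
  · refine Or.inr ⟨hq, Or.inr (Or.inl (Gm.gr_cpre_mono (hΦ.lev_sub G m acc hl') ?_))⟩
    rcases hu with ⟨_, hu⟩ | hu
    · exact hu
    · exact Gm.gr_apre_sub subset_rfl hu

theorem GrOp.lev (hΦ : Gm.GrOp Φ Q) (hm : 1 ≤ m) : Gm.GrOp (Gm.grLev Φ Q G m) Q where
  mono := fun A B h => gr_gfp_mono fun _ => Set.iInter₂_mono fun _ _ => gr_lfp_mono fun _ =>
    hΦ.mono (Gm.gr_A_mono h subset_rfl subset_rfl)
  infl := fun A => by
    refine gr_le_gfp fun v hv => Set.mem_iInter₂.2 fun l _ => ?_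
    rw [← gr_lfp_fix (hΦ.inner_mono G A _ l)]
    exact hΦ.infl _ (Or.inl hv)
  stay := fun A => by
    intro v hv
    have h1 : (1 : ℕ) ∈ Finset.Icc 1 m := by simp [hm]
    have h2 := hΦ.lev_sub G m A h1 hv
    have h3 : lfpSet (fun X => Φ (Gm.grA Q (G 1) A (Gm.grLev Φ Q G m A) X)) ⊆
      Gm.grLev Φ Q G m A := gr_lfp_le (hΦ.F_lev_sub G m A 1)
    have hfix := gr_lfp_fix (hΦ.inner_mono G A (Gm.grLev Φ Q G m A) 1)
    rw [← hfix] at h2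
    rcases hΦ.stay _ h2 with (h | ⟨hq, ⟨_, h⟩ | h⟩) | ⟨hq, h⟩
    · exact Or.inl h
    · exact Or.inr ⟨hq, h⟩
    · exact Or.inr ⟨hq, Gm.gr_apre_sub h3 h⟩
    · refine Or.inr ⟨hq, Gm.gr_cpre_mono ?_ h⟩
      exact (subset_of_eq hfix).trans h3

end level

theorem gr_op_aux (Gs : ℕ → ℕ → Set V) (Rp : ℕ → Set V) (m : ℕ → ℕ) :
    ∀ (n : ℕ) (avail : Finset ℕ) (Q : Set V), avail.card = n → (∀ p ∈ avail, 1 ≤ m p) →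
      Gm.GrOp (Gm.genRabinAux Gs Rp m n avail Q) Q := by
  intro n
  induction n with
  | zero =>
    intro avail Q _ _
    refine ⟨fun A B h => ?_, fun A => ?_, fun A => ?_⟩
    · simpa [genRabinAux] using h
    · simp [genRabinAux]
    · simp [genRabinAux]
  | succ n ih =>
    intro avail Q hc hm
    have key : ∀ p ∈ avail, Gm.GrOp (Gm.grLev (Gm.genRabinAux Gs Rp m n (avail.erase p)
        (Q ∩ (Rp p)ᶜ)) (Q ∩ (Rp p)ᶜ) (Gs p) (m p)) (Q ∩ (Rp p)ᶜ) := fun p hp =>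
      (ih _ _ (by rw [Finset.card_erase_of_mem hp, hc]; rfl)
        (fun q hq => hm q (Finset.mem_of_mem_erase hq))).lev _ _ (hm p hp)
    have heq : ∀ A, Gm.genRabinAux Gs Rp m (n+1) avail Q A = ⋃ p ∈ avail,
      Gm.grLev (Gm.genRabinAux Gs Rp m n (avail.erase p)
        (Q ∩ (Rp p)ᶜ)) (Q ∩ (Rp p)ᶜ) (Gs p) (m p) A := fun A => rfl
    refine ⟨fun A B h => ?_, fun A => ?_, fun A => ?_⟩
    · rw [heq, heq]
      exact Set.iUnion₂_mono fun p hp => (key p hp).mono h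
    · obtain ⟨p, hp⟩ : avail.Nonempty := by rw [← Finset.card_pos]; omega
      rw [heq]
      exact fun v hv => Set.mem_iUnion₂.2 ⟨p, hp, (key p hp).infl A hv⟩
    · intro v hv
      have hv' := hv
      rw [heq] at hv'
      obtain ⟨p, hp, hv'⟩ := Set.mem_iUnion₂.1 hv'
      rcases (key p hp).stay A hv' with h | ⟨hq, h⟩
      · exact Or.inl h
      · refine Or.inr ⟨hq.1, Gm.gr_cpre_mono ?_ h⟩
        rw [heq]
        exact fun v hv => Set.mem_iUnion₂.2 ⟨p, hp, hv⟩

/-- The tail condition used as the winning condition. -/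
def GrRabin (Gs : ℕ → ℕ → Set V) (Rp : ℕ → Set V) (m : ℕ → ℕ) (I : Finset ℕ)
    (π : ℕ → V) : Prop :=
  ∃ j ∈ I, (∃ N, ∀ i ≥ N, π i ∉ Rp j) ∧
    ∀ l ∈ Finset.Icc 1 (m j), ∀ N, ∃ i ≥ N, π i ∈ Gs j l

/-- Conditions that only depend on tails. -/
def GrTail (C : (ℕ → V) → Prop) : Prop := ∀ π n, C (fun i => π (n + i)) ↔ C π

theorem gr_tail_io (S : Set V) : GrTail (fun π => ∀ N, ∃ i ≥ N, π i ∈ S) := by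
  intro π n
  constructor
  · intro h N
    obtain ⟨i, hi, hS⟩ := h N
    exact ⟨n + i, by omega, hS⟩
  · intro h N
    obtain ⟨i, hi, hS⟩ := h (n + N)
    exact ⟨i - n, by omega, by simpa only [show n + (i - n) = i by omega] using hS⟩

theorem gr_tail_ev (S : Set V) : GrTail (fun π => ∃ N, ∀ i ≥ N, π i ∉ S) := by
  intro π n
  constructor
  · rintro ⟨N, h⟩
    refine ⟨n + N, fun i hi => ?_⟩
    have := h (i - n) (by omega)
    simpa only [show n + (i - n) = i by omega] using this
  · rintro ⟨N, h⟩
    exact ⟨N, fun i hi => h _ (by omega)⟩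

theorem gr_tail_rabin (Gs : ℕ → ℕ → Set V) (Rp : ℕ → Set V) (m : ℕ → ℕ) (I : Finset ℕ) :
    GrTail (GrRabin Gs Rp m I) := by
  intro π n
  unfold GrRabin
  refine exists_congr fun j => and_congr_right fun _ => and_congr (gr_tail_ev (Rp j) π n) ?_
  exact forall₂_congr fun l _ => gr_tail_io (Gs j l) π n

/-- Fairness, in the frequently form. -/
def GrFair (Gm : LiveGameGraph V) (π : ℕ → V) : Prop :=
  ∀ v w, Gm.El v w → (∀ N, ∃ i ≥ N, π i = v) → ∀ N, ∃ i ≥ N, π i = v ∧ π (i + 1) = w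

theorem gr_infinite_iff (P : ℕ → Prop) : {i | P i}.Infinite ↔ ∀ N, ∃ i ≥ N, P i := by
  rw [← Nat.frequently_atTop_iff_infinite, Filter.frequently_atTop]

theorem gr_fair_iff (π : ℕ → V) : Gm.StronglyFair π ↔ Gm.GrFair π := by
  unfold StronglyFair GrFair
  simp only [gr_infinite_iff]

theorem gr_tail_fair : GrTail (Gm.GrFair) := by
  intro π n
  unfold GrFair
  refine forall₂_congr fun v w => imp_congr_right fun _ => imp_congr ?_ ?_
  · exact gr_tail_io {v} π n
  · constructor
    · intro h N
      obtain ⟨i, hi, hS⟩ := h N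
      exact ⟨n + i, by omega, hS⟩
    · intro h N
      obtain ⟨i, hi, hS⟩ := h (n + N)
      refine ⟨i - n, by omega, ?_⟩
      simpa only [show n + (i - n + 1) = i + 1 by omega, show n + (i - n) = i by omega] using hS

end LiveGameGraph

end Basics

section Completeness

open Relation

theorem gr_generic {N : Type*} (R : N → N → Prop) (E : ℕ → N → N → Prop) (H : Set N)
    (hclosed : ∀ s t, R s t → t ∈ H)
    (dense : ∀ s ∈ H, ∀ n, ∃ t t', ReflTransGen R s t ∧ R t t' ∧ E n t t') (s : N) (hs : s ∈ H) :
    ∃ f : ℕ → N, f 0 = s ∧ (∀ i, R (f i) (f (i + 1))) ∧ ∀ n, ∃ i ≥ n, E n (f i) (f (i + 1)) := by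
  classical
  let P : ℕ → ℕ → N → Prop := fun n k =>
    Nat.rec (motive := fun _ => N → Prop) (fun s => ∃ t, R s t ∧ E n s t) (fun _ ih s => ∃ t, R s t ∧ ih t) k
  have hP : ∀ n, ∀ s ∈ H, ∃ k, P n k s := by
    intro n s hs
    obtain ⟨t, t', h1, h2, h3⟩ := dense s hs n
    clear hs
    induction h1 using ReflTransGen.head_induction_on with
    | refl => exact ⟨0, t', h2, h3⟩
    | head h _ ih =>
      obtain ⟨k, hk⟩ := ih
      exact ⟨k + 1, _, h, hk⟩
  let d : ℕ → H → ℕ := fun n s => Nat.find (p := fun k => P n k s.1) (hP n s.1 s.2)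
  have hstep : ∀ x : H × ℕ, ∃ y : H × ℕ, R x.1 y.1 ∧ ((E x.2 x.1 y.1 ∧ y.2 = x.2 + 1) ∨
      (y.2 = x.2 ∧ d x.2 y.1 < d x.2 x.1)) := by
    rintro ⟨s, j⟩
    have hf : P j (d j s) s.1 := Nat.find_spec (p := fun k => P j k s.1) (hP j s.1 s.2)
    rcases hd : d j s with _ | k
    · rw [hd] at hf
      obtain ⟨t, h1, h2⟩ := hf
      exact ⟨(⟨t, hclosed _ _ h1⟩, j + 1), h1, Or.inl ⟨h2, rfl⟩⟩
    · rw [hd] at hf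
      obtain ⟨t, h1, h2⟩ := hf
      refine ⟨(⟨t, hclosed _ _ h1⟩, j), h1, Or.inr ⟨rfl, ?_⟩⟩
      simp only [hd]
      exact Nat.lt_succ_of_le (Nat.find_min' _ h2)
  choose st hst using hstep
  let g : ℕ → H × ℕ := fun i => st^[i] (⟨s, hs⟩, 0)
  have hg : ∀ i, g (i + 1) = st (g i) := fun i => Function.iterate_succ_apply' _ _ _
  have hserve : ∀ k i, d (g i).2 (g i).1 ≤ k → ∃ i' ≥ i,
      E (g i).2 (g i').1 (g (i' + 1)).1 ∧ (g (i' + 1)).2 = (g i).2 + 1 := by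
    intro k
    induction k with
    | zero =>
      intro i hi
      rcases (hst (g i)).2 with h | ⟨_, h⟩
      · exact ⟨i, le_rfl, by rw [hg]; exact h.1, by rw [hg]; exact h.2⟩
      · omega
    | succ k ih =>
      intro i hi
      rcases (hst (g i)).2 with h | ⟨h1, h2⟩
      · exact ⟨i, le_rfl, by rw [hg]; exact h.1, by rw [hg]; exact h.2⟩
      · rw [← hg] at h1 h2
        obtain ⟨i', h3, h4, h5⟩ := ih (i + 1) (by rw [h1]; omega)
        rw [h1] at h4 h5
        exact ⟨i', by omega, h4, h5⟩
  have hreach : ∀ n, ∃ i ≥ n, (g i).2 = n := by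
    intro n
    induction n with
    | zero => exact ⟨0, le_rfl, rfl⟩
    | succ n ih =>
      obtain ⟨i, hi, h⟩ := ih
      obtain ⟨i', h3, h4, h5⟩ := hserve _ i le_rfl
      exact ⟨i' + 1, by omega, by omega⟩
  refine ⟨fun i => (g i).1, rfl, fun i => ?_, fun n => ?_⟩
  · simp only [hg]
    exact (hst (g i)).1
  · obtain ⟨i, hi, h⟩ := hreach n
    obtain ⟨i', h3, h4, h5⟩ := hserve _ i le_rfl
    rw [h] at h4
    exact ⟨i', by omega, h4⟩

namespace LiveGameGraph

variable {V : Type*} {N : Type*}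

/-- An unfolding of the game in which Player-0 choices are already fixed. -/
structure GrTree (Gm : LiveGameGraph V) (cur : N → V) (R : N → N → Prop) : Prop where
  edge : ∀ s t, R s t → Gm.E (cur s) (cur t)
  next : ∀ s, ∃ t, R s t
  free : ∀ s w, cur s ∈ Gm.V1 → Gm.E (cur s) w → ∃ t, R s t ∧ cur t = w

/-- There is an infinite fair branch inside `A` violating `C`. -/
def GrInf (Gm : LiveGameGraph V) (cur : N → V) (R : N → N → Prop) (A : Set V)
    (C : (ℕ → V) → Prop) (s : N) : Prop :=
  ∃ f : ℕ → N, f 0 = s ∧ (∀ i, R (f i) (f (i + 1))) ∧ (∀ i, cur (f i) ∈ A) ∧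
    Gm.GrFair (fun i => cur (f i)) ∧ ¬ C (fun i => cur (f i))

/-- Reachability inside `A`. -/
def GrReach (cur : N → V) (R : N → N → Prop) (A : Set V) : N → N → Prop :=
  ReflTransGen fun s t => R s t ∧ cur t ∈ A

/-- Inside `A`, one can reach `T` or an infinite fair branch violating `C`. -/
def GrGood (Gm : LiveGameGraph V) (cur : N → V) (R : N → N → Prop) (A T : Set V)
    (C : (ℕ → V) → Prop) (s : N) : Prop :=
  cur s ∈ A ∧ ∃ t, GrReach cur R A s t ∧ (cur t ∈ T ∨ Gm.GrInf cur R A C t)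

variable {Gm : LiveGameGraph V} {cur : N → V} {R : N → N → Prop}

theorem GrReach.mono {A B : Set V} (h : A ⊆ B) {s t : N} (hr : GrReach cur R A s t) :
    GrReach cur R B s t :=
  ReflTransGen.mono (fun _ _ h' => ⟨h'.1, h h'.2⟩) _ _ hr

theorem GrReach.mem {A : Set V} {s t : N} (hr : GrReach cur R A s t) (hs : cur s ∈ A) :
    cur t ∈ A := by
  induction hr with
  | refl => exact hs
  | tail _ h _ => exact h.2

theorem GrGood.of_reach {A T : Set V} {C : (ℕ → V) → Prop} {s t : N} (hs : cur s ∈ A)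
    (hr : GrReach cur R A s t) (h : Gm.GrGood cur R A T C t) : Gm.GrGood cur R A T C s :=
  let ⟨_, u, hu, hu'⟩ := h
  ⟨hs, u, ReflTransGen.trans hr hu, hu'⟩

theorem gr_V1_of_not_V0 {v : V} (h : v ∉ Gm.V0) : v ∈ Gm.V1 := by
  have : v ∈ Gm.V0 ∪ Gm.V1 := by rw [Gm.cover]; trivial
  exact this.resolve_left h

theorem gr_not_V0 {v : V} (h : v ∈ Gm.V1) : v ∉ Gm.V0 := by
  intro h'
  have : v ∈ Gm.V0 ∩ Gm.V1 := ⟨h', h⟩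
  rw [Gm.disj] at this
  exact this

/-- Outside `cpre S` Player 1 can leave `S`. -/
theorem GrTree.leave (hT : Gm.GrTree cur R) {S : Set V} {s : N} (h : cur s ∉ Gm.cpre S) :
    ∃ t, R s t ∧ cur t ∉ S := by
  by_cases h0 : cur s ∈ Gm.V0
  · obtain ⟨t, ht⟩ := hT.next s
    exact ⟨t, ht, fun hS => h (Or.inl ⟨h0, _, hT.edge _ _ ht, hS⟩)⟩
  · have h1 := gr_V1_of_not_V0 h0
    have : ∃ w, Gm.E (cur s) w ∧ w ∉ S := by
      by_contra hc
      push Not at hc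
      exact h (Or.inr ⟨h1, hc⟩)
    obtain ⟨w, hw, hS⟩ := this
    obtain ⟨t, ht, rfl⟩ := hT.free s w h1 hw
    exact ⟨t, ht, hS⟩

/-- Completeness property of an operator. -/
def GrComp (Gm : LiveGameGraph V) (cur : N → V) (R : N → N → Prop) (Φ : Set V → Set V)
    (Q : Set V) (C : (ℕ → V) → Prop) : Prop :=
  ∀ acc B : Set V, Q ∩ Gm.apre Bᶜ acc ⊆ acc → Φ acc ⊆ acc → ∀ s, cur s ∉ acc →
    Gm.GrGood cur R accᶜ (Qᶜ ∪ (Gm.cpre Bᶜ)ᶜ) C s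

theorem GrTree.comp_lev (hT : Gm.GrTree cur R) {Φ : Set V → Set V} {Q : Set V}
    {C : (ℕ → V) → Prop} (hΦ : Gm.GrOp Φ Q) (hC : Gm.GrComp cur R Φ Q C) (G : ℕ → Set V) (m : ℕ)
    (acc : Set V) (s : N) (hs : cur s ∉ Gm.grLev Φ Q G m acc) :
    Gm.GrGood cur R accᶜ Qᶜ
      (fun π => (∀ l ∈ Finset.Icc 1 m, ∀ N, ∃ i ≥ N, π i ∈ G l) ∨ C π) s := by
  set C' : (ℕ → V) → Prop := fun π => (∀ l ∈ Finset.Icc 1 m, ∀ N, ∃ i ≥ N, π i ∈ G l) ∨ C π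
    with hC'
  let S : Set V := {v | ∃ s, cur s = v ∧ ¬ Gm.GrGood cur R accᶜ Qᶜ C' s}
  have hSgood : ∀ t, cur t ∉ S → Gm.GrGood cur R accᶜ Qᶜ C' t := by
    intro t ht
    by_contra hn
    exact ht ⟨t, rfl, hn⟩
  apply hSgood
  refine fun hmem => hs ?_
  refine gr_le_gfp (X := S) ?_ hmem
  clear hmem hs
  rintro _ ⟨s, rfl, hbad⟩
  refine Set.mem_iInter₂.2 fun l hl => ?_
  by_contra hnot
  apply hbad
  set X := lfpSet fun X => Φ (Gm.grA Q (G l) acc S X) with hX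
  have hfix : Φ (Gm.grA Q (G l) acc S X) = X := gr_lfp_fix (hΦ.inner_mono G acc S l)
  set A := Gm.grA Q (G l) acc S X with hA
  have hAX : A = X := by
    apply Set.Subset.antisymm
    · rw [← hfix]; exact hΦ.infl _
    · intro v hv
      have := hΦ.stay A (by rw [hfix]; exact hv)
      rcases this with h | ⟨hq, h⟩
      · exact h
      · rw [hfix] at h
        exact Or.inr ⟨hq, Or.inr (Or.inl h)⟩
  have haccA : Aᶜ ⊆ accᶜ := Set.compl_subset_compl.2 Set.subset_union_left
  have hgood := hC A Sᶜ (by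
    rw [compl_compl, hAX]
    rintro v ⟨hq, hv⟩
    rw [← hAX]
    exact Or.inr ⟨hq, Or.inr hv⟩) (by rw [hfix, hAX]) s (by rwa [hAX])
  rw [compl_compl] at hgood
  obtain ⟨hsA, t, hreach, ht⟩ := hgood
  have hhalt : ∀ t, GrReach cur R Aᶜ s t → cur t ∈ Qᶜ ∪ (Gm.cpre S)ᶜ →
      Gm.GrGood cur R accᶜ Qᶜ C' s := by
    rintro t hreach (hq | hc)
    · exact ⟨haccA hsA, t, hreach.mono haccA, Or.inl hq⟩
    · obtain ⟨t', h1, h2⟩ := hT.leave hc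
      have hg := hSgood t' h2
      exact GrGood.of_reach (haccA hsA) (ReflTransGen.tail (hreach.mono haccA) ⟨h1, hg.1⟩) hg
  rcases ht with ht | ⟨f, hf0, hfR, hfA, hfair, hfC⟩
  · exact hhalt t hreach ht
  · by_contra hn
    apply hn
    refine ⟨haccA hsA, t, hreach.mono haccA, Or.inr ⟨f, hf0, hfR, fun i => haccA (hfA i), hfair, ?_⟩⟩
    rintro (h | h)
    · obtain ⟨i, -, hi⟩ := h l hl 0
      have hri : ∀ i, GrReach cur R Aᶜ s (f i) := by
        intro i
        induction i with
        | zero => rw [hf0]; exact hreach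
        | succ i ih => exact ReflTransGen.tail ih ⟨hfR i, hfA _⟩
      refine hn (hhalt (f i) (hri i) ?_)
      by_contra hc
      simp only [Set.mem_union, Set.mem_compl_iff, not_or, not_not] at hc
      exact hfA i (Or.inr ⟨hc.1, Or.inl ⟨hi, hc.2⟩⟩)
    · exact hfC h

theorem GrTree.comp_union [Finite V] (hT : Gm.GrTree cur R) (Gs : ℕ → ℕ → Set V)
    (Rp : ℕ → Set V) (m : ℕ → ℕ) (I : Finset ℕ) (Q acc B : Set V)
    (hB : Q ∩ Gm.apre Bᶜ acc ⊆ acc)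
    (hI : ∀ p ∈ I, ∀ s, cur s ∉ acc → Gm.GrGood cur R accᶜ (Q ∩ (Rp p)ᶜ)ᶜ
      (fun π => (∀ l ∈ Finset.Icc 1 (m p), ∀ N, ∃ i ≥ N, π i ∈ Gs p l) ∨
        GrRabin Gs Rp m (I.erase p) π) s)
    (s : N) (hs : cur s ∉ acc) :
    Gm.GrGood cur R accᶜ (Qᶜ ∪ (Gm.cpre Bᶜ)ᶜ) (GrRabin Gs Rp m I) s := by
  classical
  by_contra hbad
  let Good := Gm.GrGood cur R accᶜ (Qᶜ ∪ (Gm.cpre Bᶜ)ᶜ) (GrRabin Gs Rp m I)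
  let H : Set N := {s | cur s ∉ acc ∧ ¬ Good s}
  let RH : N → N → Prop := fun s t => R s t ∧ t ∈ H
  have hsH : s ∈ H := ⟨hs, hbad⟩
  have hext : ∀ s ∈ H, ∀ t, R s t → cur t ∉ acc → RH s t := by
    intro s hs t hst ht
    refine ⟨hst, ht, fun hg => hs.2 ?_⟩
    exact GrGood.of_reach hs.1 (ReflTransGen.single ⟨hst, ht⟩) hg
  have hreachH : ∀ s ∈ H, ∀ t, GrReach cur R accᶜ s t → ReflTransGen RH s t ∧ t ∈ H := by
    intro s hs t hr
    induction hr with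
    | refl => exact ⟨ReflTransGen.refl, hs⟩
    | tail _ h ih =>
      have := hext _ ih.2 _ h.1 h.2
      exact ⟨ih.1.tail this, this.2⟩
  have hQ : ∀ s ∈ H, cur s ∈ Q ∧ cur s ∈ Gm.cpre Bᶜ := by
    intro s hs
    by_contra hc
    refine hs.2 ⟨hs.1, s, ReflTransGen.refl, Or.inl ?_⟩
    by_contra hc'
    simp only [Set.mem_union, Set.mem_compl_iff, not_or, not_not] at hc'
    exact hc hc'
  have hnap : ∀ s ∈ H, cur s ∉ Gm.apre Bᶜ acc := fun s hs h => hs.1 (hB ⟨(hQ s hs).1, h⟩)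
  have hstep : ∀ s ∈ H, ∃ t, RH s t := by
    intro s hs
    obtain ⟨t, h1, h2⟩ := hT.leave (fun h => hnap s hs (Or.inl h))
    exact ⟨t, hext s hs t h1 h2⟩
  have hlive : ∀ s ∈ H, ∀ w, Gm.El (cur s) w → ∃ t, RH s t ∧ cur t = w := by
    intro s hs w hw
    have hV1 := (Gm.live_sub _ _ hw).1
    have hw' : w ∉ acc := by
      intro hacc
      refine hnap s hs (Or.inr ⟨⟨w, hw, hacc⟩, ?_⟩)
      exact (hQ s hs).2.resolve_left fun h => gr_not_V0 hV1 h.1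
    obtain ⟨t, h1, rfl⟩ := hT.free s w hV1 (Gm.live_sub _ _ hw).2
    exact ⟨t, hext s hs t h1 hw', rfl⟩
  have hRp : ∀ p ∈ I, ∀ s ∈ H, ∃ t, ReflTransGen RH s t ∧ t ∈ H ∧ cur t ∈ Rp p := by
    intro p hp s hs
    obtain ⟨-, t, hr, ht⟩ := hI p hp s hs.1
    obtain ⟨h1, h2⟩ := hreachH s hs t hr
    refine ⟨t, h1, h2, ?_⟩
    rcases ht with ht | ⟨f, hf0, hfR, hfA, hfair, hfC⟩
    · by_contra hc
      exact ht ⟨(hQ t h2).1, hc⟩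
    · exfalso
      refine h2.2 ⟨h2.1, t, ReflTransGen.refl, Or.inr ⟨f, hf0, hfR, hfA, hfair, ?_⟩⟩
      rintro ⟨j, hj, hj1, hj2⟩
      apply hfC
      by_cases hjp : j = p
      · subst hjp
        exact Or.inl hj2
      · exact Or.inr ⟨j, Finset.mem_erase.2 ⟨hjp, hj⟩, hj1, hj2⟩
  -- requirements
  let Rq : (V × V) ⊕ I → N → N → Prop := fun r t t' =>
    match r with
    | Sum.inl e => Gm.El e.1 e.2 → ((cur t = e.1 ∧ cur t' = e.2) ∨
        ∀ u, ReflTransGen RH t' u → cur u ≠ e.1)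
    | Sum.inr p => cur t ∈ Rp p
  have hdense : ∀ r, ∀ s ∈ H, ∃ t t', ReflTransGen RH s t ∧ RH t t' ∧ Rq r t t' := by
    rintro (⟨a, b⟩ | ⟨p, hp⟩) s hs
    · by_cases hab : Gm.El a b
      · obtain ⟨t', ht'⟩ := hstep s hs
        by_cases hu : ∃ u, ReflTransGen RH t' u ∧ cur u = a
        · obtain ⟨u, hu, rfl⟩ := hu
          have huH : u ∈ H := by
            rcases ReflTransGen.cases_tail hu with h | ⟨_, _, h⟩
            · rw [h]; exact ht'.2
            · exact h.2
          obtain ⟨u', h1, h2⟩ := hlive u huH b hab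
          exact ⟨u, u', ReflTransGen.head ht' hu, h1, fun _ => Or.inl ⟨rfl, h2⟩⟩
        · push Not at hu
          exact ⟨s, t', ReflTransGen.refl, ht', fun _ => Or.inr hu⟩
      · obtain ⟨t', ht'⟩ := hstep s hs
        exact ⟨s, t', ReflTransGen.refl, ht', fun h => absurd h hab⟩
    · obtain ⟨t, h1, h2, h3⟩ := hRp p hp s hs
      obtain ⟨t', ht'⟩ := hstep t h2
      exact ⟨t, t', h1, ht', h3⟩
  have : Nonempty ((V × V) ⊕ I) := ⟨Sum.inl (cur s, cur s)⟩
  obtain ⟨enum, henum⟩ := exists_surjective_nat ((V × V) ⊕ I)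
  obtain ⟨f, hf0, hfR, hfE⟩ := gr_generic RH (fun n => Rq (enum n.unpair.1)) H
    (fun _ _ h => h.2) (fun s hs n => hdense _ s hs) s hsH
  have hserve : ∀ r N, ∃ i ≥ N, Rq r (f i) (f (i + 1)) := by
    intro r N
    obtain ⟨a, rfl⟩ := henum r
    obtain ⟨i, hi, h⟩ := hfE (Nat.pair a N)
    rw [Nat.unpair_pair] at h
    exact ⟨i, (Nat.right_le_pair a N).trans hi, h⟩
  have hfH : ∀ i, f i ∈ H := by
    intro i
    cases i with
    | zero => rw [hf0]; exact hsH
    | succ i => exact (hfR i).2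
  have hfreach : ∀ i j, ReflTransGen RH (f i) (f (i + j)) := by
    intro i j
    induction j with
    | zero => exact ReflTransGen.refl
    | succ j ih => exact ih.tail (hfR _)
  refine hbad ⟨hs, s, ReflTransGen.refl, Or.inr ⟨f, hf0, fun i => (hfR i).1, fun i => (hfH i).1,
    ?_, ?_⟩⟩
  · intro a b hab hio N
    obtain ⟨i, hi, h⟩ := hserve (Sum.inl (a, b)) N
    rcases h hab with h | h
    · exact ⟨i, hi, h⟩
    · exfalso
      obtain ⟨i', hi', h'⟩ := hio (i + 1)
      obtain ⟨j, rfl⟩ := Nat.exists_eq_add_of_le hi'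
      exact h _ (hfreach (i + 1) j) h'
  · rintro ⟨p, hp, ⟨N, hN⟩, -⟩
    obtain ⟨i, hi, h⟩ := hserve (Sum.inr ⟨p, hp⟩) N
    exact hN i hi h

theorem GrTree.comp_aux [Finite V] (hT : Gm.GrTree cur R) (Gs : ℕ → ℕ → Set V)
    (Rp : ℕ → Set V) (m : ℕ → ℕ) :
    ∀ (n : ℕ) (avail : Finset ℕ) (Q : Set V), avail.card = n → (∀ p ∈ avail, 1 ≤ m p) →
      Gm.GrComp cur R (Gm.genRabinAux Gs Rp m n avail Q) Q (GrRabin Gs Rp m avail) := by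
  intro n
  induction n with
  | zero =>
    intro avail Q hc hm acc B hB _ s hs
    rw [Finset.card_eq_zero] at hc
    subst hc
    exact hT.comp_union Gs Rp m ∅ Q acc B hB (by simp) s hs
  | succ n ih =>
    intro avail Q hc hm acc B hB hacc s hs
    refine hT.comp_union Gs Rp m avail Q acc B hB (fun p hp s hs => ?_) s hs
    have hcard : (avail.erase p).card = n := by rw [Finset.card_erase_of_mem hp, hc]; rfl
    have hm' : ∀ q ∈ avail.erase p, 1 ≤ m q := fun q hq => hm q (Finset.mem_of_mem_erase hq)
    refine hT.comp_lev (gr_op_aux Gs Rp m n _ _ hcard hm') (ih _ _ hcard hm') (Gs p) (m p) acc s ?_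
    intro h
    exact hs (hacc (Set.mem_iUnion₂.2 ⟨p, hp, h⟩))

theorem gr_Z_eq (Gs : ℕ → ℕ → Set V) (Rp : ℕ → Set V) (m : ℕ → ℕ) (k : ℕ) :
    Gm.genRabinZ Gs Rp m k = Gm.grLev (Gm.genRabinAux Gs Rp m k (Finset.Icc 1 k) ∅ᶜ) ∅ᶜ
      (fun _ => ∅) 1 ∅ := by
  simp [genRabinZ, grLev, grA]

theorem gr_prepend {A : Set V} {s t : N} (hr : GrReach cur R A s t) (f : ℕ → N) (hf0 : f 0 = t)
    (hf : ∀ i, R (f i) (f (i + 1))) :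
    ∃ (g : ℕ → N) (n : ℕ), g 0 = s ∧ (∀ i, R (g i) (g (i + 1))) ∧ ∀ i, g (n + i) = f i := by
  induction hr using ReflTransGen.head_induction_on with
  | refl => exact ⟨f, 0, hf0, hf, fun i => by rw [zero_add]⟩
  | @head a b h _ ih =>
    obtain ⟨g, n, h0, h1, h2⟩ := ih
    refine ⟨fun i => Nat.casesOn i a g, n + 1, rfl, fun i => ?_, fun i => ?_⟩
    · cases i with
      | zero => simpa [h0] using h.1
      | succ i => exact h1 i
    · rw [show n + 1 + i = (n + i) + 1 by omega]
      exact h2 i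

theorem gr_complete [Finite V] (Gs : ℕ → ℕ → Set V) (Rp : ℕ → Set V) (m : ℕ → ℕ) (k : ℕ)
    (hm : ∀ p ∈ Finset.Icc 1 k, 1 ≤ m p) :
    Gm.WinningRegion (GrRabin Gs Rp m (Finset.Icc 1 k)) ⊆ Gm.genRabinZ Gs Rp m k := by
  classical
  rintro v0 ⟨ρ0, hρ0, hwin⟩
  by_contra hv
  rw [gr_Z_eq] at hv
  let cur : List V × V → V := Prod.snd
  let R : List V × V → List V × V → Prop := fun s t =>
    t.1 = s.1 ++ [s.2] ∧ Gm.E s.2 t.2 ∧ (s.2 ∈ Gm.V0 → t.2 = ρ0 s.1 s.2)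
  have hT : Gm.GrTree cur R := by
    refine ⟨fun s t h => h.2.1, fun s => ?_, fun s w h1 hw => ?_⟩
    · by_cases h0 : s.2 ∈ Gm.V0
      · exact ⟨(s.1 ++ [s.2], ρ0 s.1 s.2), rfl, hρ0 _ _ h0, fun _ => rfl⟩
      · obtain ⟨w, hw⟩ := Gm.succ_nonempty s.2
        exact ⟨(s.1 ++ [s.2], w), rfl, hw, fun h => absurd h h0⟩
    · exact ⟨(s.1 ++ [s.2], w), ⟨rfl, hw, fun h => absurd h (gr_not_V0 h1)⟩, rfl⟩
  have hc : (Finset.Icc 1 k).card = k := by simp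
  obtain ⟨-, t, hr, ht⟩ := hT.comp_lev (gr_op_aux Gs Rp m k _ ∅ᶜ hc hm)
    (hT.comp_aux Gs Rp m k _ ∅ᶜ hc hm) (fun _ => ∅) 1 ∅ ([], v0) hv
  rcases ht with ht | ⟨f, hf0, hfR, -, hfair, hfC⟩
  · simp at ht
  obtain ⟨g, n, hg0, hgR, hgf⟩ := gr_prepend hr f hf0 hfR
  let π : ℕ → V := fun i => (g i).2
  have htail : (fun i => cur (f i)) = fun i => π (n + i) := by
    funext i
    simp only [π, hgf, cur]
  rw [htail] at hfair hfC
  have hfair' := (gr_tail_fair π n).1 hfair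
  have hnot : ¬ GrRabin Gs Rp m (Finset.Icc 1 k) π := fun h =>
    hfC (Or.inr ((gr_tail_rabin Gs Rp m _ π n).2 h))
  have hhist : ∀ i, (g i).1 = List.ofFn fun j : Fin i => π j.1 := by
    intro i
    induction i with
    | zero => rw [hg0]; simp
    | succ i ih =>
      rw [(hgR i).1, ih, List.ofFn_succ']
      simp [π, List.concat_eq_append]
  let ρ1 : List V → V → V := fun h v =>
    if Gm.E v (π (h.length + 1)) then π (h.length + 1) else (Gm.succ_nonempty v).choose
  refine hnot (hwin ρ1 ?_ π ⟨?_, fun i => ⟨fun h0 => ?_, fun h1 => ?_⟩⟩ ((gr_fair_iff π).2 hfair'))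
  · intro h v _
    by_cases he : Gm.E v (π (h.length + 1))
    · simp only [ρ1, if_pos he]; exact he
    · simp only [ρ1, if_neg he]; exact (Gm.succ_nonempty v).choose_spec
  · simp only [π, hg0]
  · rw [← hhist]
    exact (hgR i).2.2 h0
  · have he : Gm.E (π i) (π (i + 1)) := (hgR i).2.1
    simp only [ρ1, List.length_ofFn, if_pos he]

end LiveGameGraph

end Completeness

section Soundness

theorem gr_pigeon {V : Type*} [Finite V] (π : ℕ → V) {P : ℕ → Prop} (h : ∀ N, ∃ i ≥ N, P i) :
    ∃ v, ∀ N, ∃ i ≥ N, P i ∧ π i = v := by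
  by_contra hc
  push Not at hc
  choose b hb using hc
  obtain ⟨M, hM⟩ := (Set.finite_range b).bddAbove
  obtain ⟨i, hi, hP⟩ := h M
  exact hb (π i) i ((hM ⟨_, rfl⟩).trans hi) hP rfl

theorem gr_antitone_const (x : ℕ → ℕ) (N : ℕ) (h : ∀ i ≥ N, x (i + 1) ≤ x i) :
    ∃ M ≥ N, ∀ i ≥ M, x i = x M := by
  classical
  have hex : ∃ y, ∃ i ≥ N, x i = y := ⟨x N, N, le_rfl, rfl⟩
  obtain ⟨M, hM, hy⟩ := Nat.find_spec hex
  refine ⟨M, hM, fun i hi => ?_⟩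
  have h1 : x i ≤ x M := by
    induction i, hi using Nat.le_induction with
    | base => exact le_rfl
    | succ i hi ih => exact (h i (hM.trans hi)).trans ih
  have h2 : Nat.find hex ≤ x i := Nat.find_min' hex ⟨i, hM.trans hi, rfl⟩
  omega

namespace LiveGameGraph

variable {V : Type*} {Λ : Type*}

/-- One step of a play following `σ` with memory value `a`. -/
def GrMove (Gm : LiveGameGraph V) (σ : Λ → V → V) (a : Λ) (v w : V) : Prop :=
  Gm.E v w ∧ (v ∈ Gm.V0 → w = σ a v)

/-- A local strategy on `U` towards `acc`. -/
structure GrStrat (Gm : LiveGameGraph V) (get : Λ → ℕ → ℕ) (avail : Finset ℕ) (U acc Q : Set V)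
    (C : (ℕ → V) → Prop) (σ : Λ → V → V) (up : Λ → V → Λ) : Prop where
  inQ : ∀ v, v ∈ U → v ∉ acc → v ∈ Q
  legal : ∀ a v, v ∈ U → v ∉ acc → v ∈ Gm.V0 → Gm.E v (σ a v)
  stay : ∀ a v w, v ∈ U → v ∉ acc → Gm.GrMove σ a v w → w ∈ U
  pres : ∀ a v q, q ∉ avail → get (up a v) q = get a q
  win : ∀ (ls : ℕ → Λ) (π : ℕ → V), (∀ i, π i ∈ U ∧ π i ∉ acc ∧
    Gm.GrMove σ (ls i) (π i) (π (i + 1)) ∧ ls (i + 1) = up (ls i) (π i)) → Gm.GrFair π → C π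

variable {Gm : LiveGameGraph V}

open Classical in
/-- Pick a successor in `S` if there is one. -/
noncomputable def grPick (Gm : LiveGameGraph V) (S : Set V) (v : V) : V :=
  if h : ∃ w, Gm.E v w ∧ w ∈ S then h.choose else v

theorem gr_pick_spec {S : Set V} {v : V} (h : v ∈ Gm.cpre S) (h0 : v ∈ Gm.V0) :
    Gm.E v (Gm.grPick S v) ∧ Gm.grPick S v ∈ S := by
  have hex : ∃ w, Gm.E v w ∧ w ∈ S := by
    rcases h with h | h
    · exact h.2
    · exact absurd h0 (gr_not_V0 h.1)
  unfold grPick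
  rw [dif_pos hex]
  exact hex.choose_spec

theorem gr_pick_move {S : Set V} {v w : V} (h : v ∈ Gm.cpre S) (hE : Gm.E v w)
    (hw : v ∈ Gm.V0 → w = Gm.grPick S v) : w ∈ S := by
  by_cases h0 : v ∈ Gm.V0
  · rw [hw h0]; exact (gr_pick_spec h h0).2
  · rcases h with h | h
    · exact absurd h.1 h0
    · exact h.2 w hE

theorem gr_sound_lev [Finite V] {get : Λ → ℕ → ℕ} {avail : Finset ℕ} {Φ : Set V → Set V}
    {Q : Set V} {C : (ℕ → V) → Prop} (hCt : GrTail C) (hΦ : Gm.GrOp Φ Q)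
    (hS : ∀ acc, ∃ σ up, Gm.GrStrat get avail (Φ acc) acc Q C σ up)
    (p : ℕ) (hp : p ∉ avail) (G : ℕ → Set V) (m : ℕ) (inc : Λ → Λ) (hm : 1 ≤ m)
    (hget : ∀ a, get a p ∈ Finset.Icc 1 m)
    (hinc : ∀ a, get (inc a) p = if get a p = m then 1 else get a p + 1)
    (hinc' : ∀ a q, q ≠ p → get (inc a) q = get a q) (acc : Set V) :
    ∃ σ up, Gm.GrStrat get (insert p avail) (Gm.grLev Φ Q G m acc) acc Q
      (fun π => (∀ l ∈ Finset.Icc 1 m, ∀ N, ∃ i ≥ N, π i ∈ G l) ∨ C π) σ up := by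
  classical
  choose σi upi hi using hS
  set Y := Gm.grLev Φ Q G m acc with hY
  let F : ℕ → Set V → Set V := fun l X => Φ (Gm.grA Q (G l) acc Y X)
  have hFm : ∀ l, Monotone (F l) := fun l => hΦ.inner_mono G acc Y l
  let It : ℕ → ℕ → Set V := fun l x => (F l)^[x] ∅
  let A : ℕ → ℕ → Set V := fun l x => Gm.grA Q (G l) acc Y (It l x)
  have hItS : ∀ l x, It l (x + 1) = Φ (A l x) := fun l x => Function.iterate_succ_apply' _ _ _
  have hItY : ∀ l x, It l x ⊆ Y := by
    intro l x
    induction x with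
    | zero => exact Set.empty_subset _
    | succ x ih =>
      rw [hItS]
      exact (hFm l ih).trans (hΦ.F_lev_sub G m acc l)
  let rank : ℕ → V → ℕ := fun l v => sInf {x | v ∈ It l (x + 1)}
  have hrank : ∀ l ∈ Finset.Icc 1 m, ∀ v ∈ Y, v ∈ It l (rank l v + 1) := by
    intro l hl v hv
    obtain ⟨n, hn⟩ := gr_lfp_iter (hFm l) (hΦ.lev_sub G m acc hl hv)
    have hne : {x | v ∈ It l (x + 1)}.Nonempty := by
      cases n with
      | zero => exact absurd hn (Set.notMem_empty v)
      | succ n => exact ⟨n, hn⟩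
    exact Nat.sInf_mem hne
  have hrank_le : ∀ l x v, v ∈ It l (x + 1) → rank l v ≤ x := fun l x v h => Nat.sInf_le h
  have hrank_lt : ∀ l x v, v ∈ It l x → rank l v < x := by
    intro l x v h
    cases x with
    | zero => exact absurd h (Set.notMem_empty v)
    | succ x => exact Nat.lt_succ_of_le (hrank_le l x v h)
  let Pa : Λ → V → Prop := fun a v => v ∈ Q ∧ v ∈ G (get a p) ∧ v ∈ Gm.cpre Y
  let Pb : Λ → V → Prop := fun a v =>
    v ∈ Q ∧ v ∈ Gm.apre Y (It (get a p) (rank (get a p) v))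
  let σ : Λ → V → V := fun a v =>
    if Pa a v then Gm.grPick Y v else
    if Pb a v then Gm.grPick (It (get a p) (rank (get a p) v)) v
    else σi (A (get a p) (rank (get a p) v)) a v
  let up : Λ → V → Λ := fun a v =>
    if Pa a v then inc a else
    if Pb a v then a else upi (A (get a p) (rank (get a p) v)) a v
  have hσa : ∀ a v, Pa a v → σ a v = Gm.grPick Y v := fun a v h => if_pos h
  have hσb : ∀ a v, ¬ Pa a v → Pb a v →
      σ a v = Gm.grPick (It (get a p) (rank (get a p) v)) v := fun a v h h' => by
    simp only [σ, if_neg h, if_pos h']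
  have hσc : ∀ a v, ¬ Pa a v → ¬ Pb a v →
      σ a v = σi (A (get a p) (rank (get a p) v)) a v := fun a v h h' => by
    simp only [σ, if_neg h, if_neg h']
  have hua : ∀ a v, Pa a v → up a v = inc a := fun a v h => if_pos h
  have hub : ∀ a v, ¬ Pa a v → Pb a v → up a v = a := fun a v h h' => by
    simp only [up, if_neg h, if_pos h']
  have huc : ∀ a v, ¬ Pa a v → ¬ Pb a v →
      up a v = upi (A (get a p) (rank (get a p) v)) a v := fun a v h h' => by
    simp only [up, if_neg h, if_neg h']
  -- case c facts
  have hcU : ∀ a v, v ∈ Y → v ∈ Φ (A (get a p) (rank (get a p) v)) := fun a v hv => by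
    rw [← hItS]; exact hrank _ (hget a) v hv
  have hcA : ∀ a v, v ∉ acc → ¬ Pa a v → ¬ Pb a v → v ∉ A (get a p) (rank (get a p) v) := by
    rintro a v h1 h2 h3 (h | ⟨hq, ⟨hg, h⟩ | h⟩)
    · exact h1 h
    · exact h2 ⟨hq, hg, h⟩
    · exact h3 ⟨hq, h⟩
  have hcM : ∀ a v w, ¬ Pa a v → ¬ Pb a v → Gm.GrMove σ a v w →
      Gm.GrMove (σi (A (get a p) (rank (get a p) v))) a v w := fun a v w h2 h3 h =>
    ⟨h.1, fun h0 => by rw [h.2 h0, hσc a v h2 h3]⟩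
  have hcstep : ∀ a v w, v ∈ Y → v ∉ acc → ¬ Pa a v → ¬ Pb a v → Gm.GrMove σ a v w →
      w ∈ It (get a p) (rank (get a p) v + 1) := by
    intro a v w hv hacc h2 h3 hmv
    rw [hItS]
    exact (hi _).stay a v w (hcU a v hv) (hcA a v hacc h2 h3) (hcM a v w h2 h3 hmv)
  have hbV0 : ∀ a v, Pb a v → v ∈ Gm.cpre (It (get a p) (rank (get a p) v)) ∨
      v ∉ Gm.V0 ∧ v ∈ Gm.lpre (It (get a p) (rank (get a p) v)) ∧ v ∈ Gm.pre1 Y := by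
    rintro a v ⟨_, h | ⟨h1, h2⟩⟩
    · exact Or.inl h
    · exact Or.inr ⟨gr_not_V0 h2.1, h1, h2⟩
  refine ⟨σ, up, ?_, ?_, ?_, ?_, ?_⟩
  · intro v hv hacc
    rcases (hΦ.lev G m hm).stay acc hv with h | h
    · exact absurd h hacc
    · exact h.1
  · intro a v hv hacc h0
    by_cases ha : Pa a v
    · rw [hσa a v ha]
      exact (gr_pick_spec ha.2.2 h0).1
    by_cases hb : Pb a v
    · rw [hσb a v ha hb]
      rcases hbV0 a v hb with h | h
      · exact (gr_pick_spec h h0).1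
      · exact absurd h0 h.1
    · rw [hσc a v ha hb]
      exact (hi _).legal a v (hcU a v hv) (hcA a v hacc ha hb) h0
  · intro a v w hv hacc hmv
    by_cases ha : Pa a v
    · exact gr_pick_move ha.2.2 hmv.1 fun h0 => by rw [hmv.2 h0, hσa a v ha]
    by_cases hb : Pb a v
    · rcases hbV0 a v hb with h | h
      · exact hItY _ _ (gr_pick_move h hmv.1 fun h0 => by rw [hmv.2 h0, hσb a v ha hb])
      · exact h.2.2.2 w hmv.1
    · exact hItY _ _ (hcstep a v w hv hacc ha hb hmv)
  · intro a v q hq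
    rw [Finset.mem_insert, not_or] at hq
    by_cases ha : Pa a v
    · rw [hua a v ha, hinc' a q hq.1]
    by_cases hb : Pb a v
    · rw [hub a v ha hb]
    · rw [huc a v ha hb]
      exact (hi _).pres a v q hq.2
  · intro ls π hπ hfair
    have hYi : ∀ i, π i ∈ Y := fun i => (hπ i).1
    have hacci : ∀ i, π i ∉ acc := fun i => (hπ i).2.1
    have hmvi : ∀ i, Gm.GrMove σ (ls i) (π i) (π (i + 1)) := fun i => (hπ i).2.2.1
    have hupi : ∀ i, ls (i + 1) = up (ls i) (π i) := fun i => (hπ i).2.2.2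
    have hconst : ∀ i, ¬ Pa (ls i) (π i) → get (ls (i + 1)) p = get (ls i) p := by
      intro i ha
      rw [hupi]
      by_cases hb : Pb (ls i) (π i)
      · rw [hub _ _ ha hb]
      · rw [huc _ _ ha hb]
        exact (hi _).pres _ _ p hp
    by_cases hio : ∀ N, ∃ i ≥ N, Pa (ls i) (π i)
    · left
      -- the next `Pa` event keeps the current goal
      have hnext : ∀ N, ∃ i ≥ N, Pa (ls i) (π i) ∧ get (ls i) p = get (ls N) p := by
        intro N
        have hex : ∃ d, Pa (ls (N + d)) (π (N + d)) := by
          obtain ⟨i, hi, h⟩ := hio N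
          exact ⟨i - N, by rwa [show N + (i - N) = i by omega]⟩
        have hlt : ∀ d ≤ Nat.find hex, get (ls (N + d)) p = get (ls N) p := by
          intro d
          induction d with
          | zero => intro _; rfl
          | succ d ih =>
            intro hd
            rw [← ih (by omega)]
            exact hconst (N + d) (Nat.find_min hex (by omega))
        exact ⟨N + Nat.find hex, by omega, Nat.find_spec hex, hlt _ le_rfl⟩
      have hnext' : ∀ N, ∃ i ≥ N, get (ls i) p =
          if get (ls N) p = m then 1 else get (ls N) p + 1 := by
        intro N
        obtain ⟨i, hi, h1, h2⟩ := hnext N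
        exact ⟨i + 1, by omega, by rw [hupi, hua _ _ h1, hinc, h2]⟩
      have hclimb : ∀ N j, get (ls N) p ≤ j → j ≤ m → ∃ i ≥ N, get (ls i) p = j := by
        intro N j hj
        induction j, hj using Nat.le_induction with
        | base => intro _; exact ⟨N, le_rfl, rfl⟩
        | succ j hj ih =>
          intro hm
          obtain ⟨i, hi, h⟩ := ih (by omega)
          obtain ⟨i', hi', h'⟩ := hnext' i
          refine ⟨i', by omega, ?_⟩
          rw [h', h, if_neg (by omega)]
      intro l hl N
      rw [Finset.mem_Icc] at hl
      obtain ⟨i1, h1, e1⟩ := hclimb N m (Finset.mem_Icc.1 (hget _)).2 le_rfl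
      obtain ⟨i2, h2, e2⟩ := hnext' i1
      rw [if_pos e1] at e2
      obtain ⟨i3, h3, e3⟩ := hclimb i2 l (by omega) hl.2
      obtain ⟨i4, h4, e4, e5⟩ := hnext i3
      refine ⟨i4, by omega, ?_⟩
      have := e4.2.1
      rwa [e5, e3] at this
    · right
      push Not at hio
      obtain ⟨N0, hN0⟩ := hio
      set l := get (ls N0) p with hl
      have hlc : ∀ i ≥ N0, get (ls i) p = l := by
        intro i hi
        induction i, hi using Nat.le_induction with
        | base => rfl
        | succ i hi ih => rw [hconst i (hN0 i hi), ih]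
      have hlm : l ∈ Finset.Icc 1 m := hget _
      let x : ℕ → ℕ := fun i => rank l (π i)
      have hc_le : ∀ i ≥ N0, ¬ Pb (ls i) (π i) → x (i + 1) ≤ x i := by
        intro i hi hb
        have := hcstep _ _ _ (hYi i) (hacci i) (hN0 i hi) hb (hmvi i)
        rw [hlc i hi] at this
        exact hrank_le _ _ _ this
      by_cases hbio : ∀ N, ∃ i ≥ N, Pb (ls i) (π i)
      · exfalso
        have hex : ∃ y, ∀ N, ∃ i ≥ N, x i ≤ y := by
          obtain ⟨v, hv⟩ := gr_pigeon π hbio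
          refine ⟨rank l v, fun N => ?_⟩
          obtain ⟨i, hi, -, h⟩ := hv N
          exact ⟨i, hi, by simp only [x, h, le_refl]⟩
        set y := Nat.find hex with hy
        have hyio := Nat.find_spec hex
        rw [← hy] at hyio
        have hlow : ∃ N1 ≥ N0, ∀ i ≥ N1, y ≤ x i := by
          rcases hy0 : y with _ | y'
          · exact ⟨N0, le_rfl, fun i _ => Nat.zero_le _⟩
          · have := Nat.find_min hex (m := y') (by omega)
            push Not at this
            obtain ⟨N, hN⟩ := this
            exact ⟨max N N0, le_max_right _ _, fun i hi => hN i ((le_max_left _ _).trans hi)⟩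
        obtain ⟨N1, hN1, hlow⟩ := hlow
        have hbmin : ∀ N, ∃ i ≥ N, (N1 ≤ i ∧ Pb (ls i) (π i) ∧ x i = y) := by
          intro N
          obtain ⟨i, hi, hxi⟩ := hyio (max N N1)
          have hiN : N ≤ i := (le_max_left _ _).trans hi
          have hiN1 : N1 ≤ i := (le_max_right _ _).trans hi
          have hex2 : ∃ d, Pb (ls (i + d)) (π (i + d)) := by
            obtain ⟨j, hj, h⟩ := hbio i
            exact ⟨j - i, by rwa [show i + (j - i) = j by omega]⟩
          have hle : ∀ d ≤ Nat.find hex2, x (i + d) ≤ y := by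
            intro d
            induction d with
            | zero => intro _; exact hxi
            | succ d ih =>
              intro hd
              exact (hc_le (i + d) (by omega) (Nat.find_min hex2 (by omega))).trans
                (ih (by omega))
          exact ⟨i + Nat.find hex2, by omega, by omega, Nat.find_spec hex2,
            le_antisymm (hle _ le_rfl) (hlow _ (by omega))⟩
        obtain ⟨v, hv⟩ := gr_pigeon π hbmin
        obtain ⟨i, -, ⟨hi1, hb, hxi⟩, hvi⟩ := hv 0
        have hbb := hbV0 _ _ hb
        have hx' : rank l (π i) = y := hxi
        rw [hlc i (by omega), hx'] at hbb
        rcases hbb with h | ⟨-, ⟨w, hlive, hw⟩, -⟩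
        · have hmem : π (i + 1) ∈ It l y := by
            refine gr_pick_move h (hmvi i).1 fun h0 => ?_
            rw [(hmvi i).2 h0, hσb _ _ (hN0 i (by omega)) hb, hlc i (by omega), hx']
          have h1 := hrank_lt l y _ hmem
          have h2 := hlow (i + 1) (by omega)
          simp only [x] at h2
          omega
        · rw [hvi] at hlive
          obtain ⟨j, hj, hj1, hj2⟩ := hfair v w hlive
            (fun N => let ⟨i, hi, _, h⟩ := hv N; ⟨i, hi, h⟩) N1
          have h1 := hrank_lt l y _ hw
          have h2 := hlow (j + 1) (by omega)
          simp only [x, hj2] at h2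
          omega
      · push Not at hbio
        obtain ⟨N1, hN1⟩ := hbio
        obtain ⟨M, hM, hMc⟩ := gr_antitone_const x (max N0 N1) (fun i hi =>
          hc_le i ((le_max_left _ _).trans hi) (hN1 i ((le_max_right _ _).trans hi)))
        have hM0 : N0 ≤ M := (le_max_left _ _).trans hM
        have hM1 : N1 ≤ M := (le_max_right _ _).trans hM
        rw [← hCt π M]
        refine (hi (A l (x M))).win (fun i => ls (M + i)) _ (fun i => ?_)
          ((gr_tail_fair π M).2 hfair)
        have ha := hN0 (M + i) (by omega)
        have hb := hN1 (M + i) (by omega)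
        have e1 := hlc (M + i) (by omega)
        have e2 : rank l (π (M + i)) = x M := hMc (M + i) (by omega)
        have f1 := hcU (ls (M + i)) _ (hYi (M + i))
        have f2 := hcA _ _ (hacci (M + i)) ha hb
        have f3 := hcM _ _ _ ha hb (hmvi (M + i))
        have f4 := huc _ _ ha hb
        rw [← hupi] at f4
        rw [e1, e2] at f1 f2 f3 f4
        exact ⟨f1, f2, f3, f4⟩

theorem gr_sound_union {get : Λ → ℕ → ℕ} {avail I : Finset ℕ} {Ψ : ℕ → Set V} {acc Q : Set V}
    {Qp : ℕ → Set V} {C : (ℕ → V) → Prop} {Cp : ℕ → (ℕ → V) → Prop}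
    (hS : ∀ p ∈ I, ∃ σ up, Gm.GrStrat get avail (Ψ p) acc (Qp p) (Cp p) σ up)
    (hQ : ∀ p ∈ I, Qp p ⊆ Q) (hCt : ∀ p ∈ I, GrTail (Cp p))
    (hC : ∀ p ∈ I, ∀ π, Cp p π → (∃ N, ∀ i ≥ N, π i ∈ Qp p) → C π) :
    ∃ σ up, Gm.GrStrat (Λ := Λ) get avail (⋃ p ∈ I, Ψ p) acc Q C σ up := by
  classical
  have hS' : ∀ p, ∃ σ up, p ∈ I → Gm.GrStrat get avail (Ψ p) acc (Qp p) (Cp p) σ up := by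
    intro p
    by_cases hp : p ∈ I
    · obtain ⟨σ, up, h⟩ := hS p hp
      exact ⟨σ, up, fun _ => h⟩
    · exact ⟨fun _ v => v, fun a _ => a, fun h => absurd h hp⟩
  choose σ up hs using hS'
  let idx : V → ℕ := fun v => sInf {p | p ∈ I ∧ v ∈ Ψ p}
  have hidx : ∀ v, v ∈ (⋃ p ∈ I, Ψ p) → idx v ∈ I ∧ v ∈ Ψ (idx v) := by
    intro v hv
    obtain ⟨p, hp, hv⟩ := Set.mem_iUnion₂.1 hv
    exact Nat.sInf_mem (s := {p | p ∈ I ∧ v ∈ Ψ p}) ⟨p, hp, hv⟩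
  have hidx_le : ∀ v p, p ∈ I → v ∈ Ψ p → idx v ≤ p := fun v p h h' => Nat.sInf_le ⟨h, h'⟩
  let σ' : Λ → V → V := fun a v => σ (idx v) a v
  let up' : Λ → V → Λ := fun a v => if idx v ∈ I then up (idx v) a v else a
  have hmv : ∀ a v w, Gm.GrMove σ' a v w → Gm.GrMove (σ (idx v)) a v w := fun a v w h => h
  have hnext : ∀ a v w, v ∈ (⋃ p ∈ I, Ψ p) → v ∉ acc → Gm.GrMove σ' a v w → w ∈ Ψ (idx v) :=
    fun a v w hv hacc h =>
      (hs _ (hidx v hv).1).stay a v w (hidx v hv).2 hacc (hmv a v w h)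
  refine ⟨σ', up', ?_, ?_, ?_, ?_, ?_⟩
  · exact fun v hv hacc => hQ _ (hidx v hv).1 ((hs _ (hidx v hv).1).inQ v (hidx v hv).2 hacc)
  · exact fun a v hv hacc h0 => (hs _ (hidx v hv).1).legal a v (hidx v hv).2 hacc h0
  · exact fun a v w hv hacc h =>
      Set.mem_iUnion₂.2 ⟨idx v, (hidx v hv).1, hnext a v w hv hacc h⟩
  · intro a v q hq
    by_cases h : idx v ∈ I
    · simp only [up', if_pos h]
      exact (hs _ h).pres a v q hq
    · simp only [up', if_neg h]
  · intro ls π hπ hfair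
    obtain ⟨M, -, hM⟩ := gr_antitone_const (fun i => idx (π i)) 0 (fun i _ =>
      hidx_le _ _ (hidx _ (hπ i).1).1 (hnext _ _ _ (hπ i).1 (hπ i).2.1 (hπ i).2.2.1))
    have hpI := (hidx _ (hπ M).1).1
    have hmem : ∀ i ≥ M, π i ∈ Ψ (idx (π M)) := fun i hi => by
      rw [← hM i hi]; exact (hidx _ (hπ i).1).2
    refine hC _ hpI π ?_ ⟨M, fun i hi => (hs _ hpI).inQ _ (hmem i hi) (hπ i).2.1⟩
    rw [← hCt _ hpI π M]
    refine (hs _ hpI).win (fun i => ls (M + i)) _ (fun i => ?_) ((gr_tail_fair π M).2 hfair)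
    have e := hM (M + i) (by omega)
    have f3 := hmv _ _ _ (hπ (M + i)).2.2.1
    have f4 := (hπ (M + i)).2.2.2
    simp only [up', if_pos (hidx _ (hπ (M + i)).1).1] at f4
    rw [e] at f3 f4
    exact ⟨hmem _ (by omega), (hπ _).2.1, f3, f4⟩

theorem gr_sound_aux [Finite V] (Gs : ℕ → ℕ → Set V) (Rp : ℕ → Set V) (m : ℕ → ℕ)
    (get : Λ → ℕ → ℕ) (inc : ℕ → Λ → Λ) (P : Finset ℕ)
    (hget : ∀ p ∈ P, ∀ a, get a p ∈ Finset.Icc 1 (m p))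
    (hinc : ∀ p ∈ P, ∀ a, get (inc p a) p = if get a p = m p then 1 else get a p + 1)
    (hinc' : ∀ p ∈ P, ∀ a q, q ≠ p → get (inc p a) q = get a q) (hm : ∀ p ∈ P, 1 ≤ m p) :
    ∀ (n : ℕ) (avail : Finset ℕ) (Q : Set V), avail.card = n → avail ⊆ P → ∀ acc,
      ∃ σ up, Gm.GrStrat get avail (Gm.genRabinAux Gs Rp m n avail Q acc) acc Q
        (GrRabin Gs Rp m avail) σ up := by
  intro n
  induction n with
  | zero =>
    intro avail Q _ _ acc
    refine ⟨fun _ v => v, fun a _ => a, ?_, ?_, ?_, fun _ _ _ _ => rfl, ?_⟩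
    · exact fun v h h' => absurd h h'
    · exact fun a v h h' => absurd h h'
    · exact fun a v w h h' => absurd h h'
    · exact fun ls π h => absurd (h 0).1 (h 0).2.1
  | succ n ih =>
    intro avail Q hc hsub acc
    have key := gr_sound_union (Gm := Gm) (Λ := Λ) (get := get) (avail := avail) (I := avail)
      (Ψ := fun p => Gm.grLev (Gm.genRabinAux Gs Rp m n (avail.erase p)
        (Q ∩ (Rp p)ᶜ)) (Q ∩ (Rp p)ᶜ) (Gs p) (m p) acc) (acc := acc) (Q := Q)
      (Qp := fun p => Q ∩ (Rp p)ᶜ) (C := GrRabin Gs Rp m avail)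
      (Cp := fun p π => (∀ l ∈ Finset.Icc 1 (m p), ∀ N, ∃ i ≥ N, π i ∈ Gs p l) ∨
        GrRabin Gs Rp m (avail.erase p) π) ?_ ?_ ?_ ?_
    · exact key
    · intro p hp
      have hcard : (avail.erase p).card = n := by rw [Finset.card_erase_of_mem hp, hc]; rfl
      have hsub' : avail.erase p ⊆ P := (Finset.erase_subset _ _).trans hsub
      have := gr_sound_lev (gr_tail_rabin Gs Rp m (avail.erase p))
        (gr_op_aux (Gm := Gm) Gs Rp m n (avail.erase p) (Q ∩ (Rp p)ᶜ) hcard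
          fun q hq => hm q (hsub' hq))
        (ih (avail.erase p) (Q ∩ (Rp p)ᶜ) hcard hsub') p (Finset.notMem_erase p avail) (Gs p) (m p)
        (inc p) (hm p (hsub hp)) (hget p (hsub hp)) (hinc p (hsub hp)) (hinc' p (hsub hp)) acc
      rwa [Finset.insert_erase hp] at this
    · exact fun p _ => Set.inter_subset_left
    · intro p _ π n
      refine or_congr ?_ (gr_tail_rabin Gs Rp m (avail.erase p) π n)
      exact forall₂_congr fun l _ => gr_tail_io (Gs p l) π n
    · rintro p hp π (h | ⟨j, hj, h⟩) ⟨N, hN⟩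
      · exact ⟨p, hp, ⟨N, fun i hi => (hN i hi).2⟩, h⟩
      · exact ⟨j, Finset.mem_of_mem_erase hj, h⟩

theorem gr_sound [Finite V] (Gs : ℕ → ℕ → Set V) (Rp : ℕ → Set V) (m : ℕ → ℕ) (k : ℕ)
    (hm : ∀ p ∈ Finset.Icc 1 k, 1 ≤ m p) :
    ∃ (M : Type) (_ : Fintype M) (m0 : M) (upd : M → V → M) (c : M → V → V),
      (∀ mm v, v ∈ Gm.V0 → Gm.E v (c mm v)) ∧
      ∀ v0 ∈ Gm.genRabinZ Gs Rp m k,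
        Gm.WinsFrom (GrRabin Gs Rp m (Finset.Icc 1 k))
          (fun h v => c (List.foldl upd m0 h) v) v0 := by
  classical
  let Λ : Type := (q : Finset.Icc 1 k) → Finset.Icc 1 (m q.1)
  let a0 : Λ := fun q => ⟨1, Finset.mem_Icc.2 ⟨le_rfl, hm q.1 q.2⟩⟩
  let get : Λ → ℕ → ℕ := fun a q => if h : q ∈ Finset.Icc 1 k then (a ⟨q, h⟩).1 else 1
  have hget1 : ∀ a q, q ∉ Finset.Icc 1 k → get a q = 1 := fun a q h => dif_neg h
  have hget2 : ∀ a q (h : q ∈ Finset.Icc 1 k), get a q = (a ⟨q, h⟩).1 := fun a q h => dif_pos h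
  have hget : ∀ p ∈ Finset.Icc 1 k, ∀ a, get a p ∈ Finset.Icc 1 (m p) := fun p hp a => by
    rw [hget2 a p hp]; exact (a ⟨p, hp⟩).2
  have hincex : ∀ p ∈ Finset.Icc 1 k, ∀ a : Λ, ∃ b : Λ,
      get b p = (if get a p = m p then 1 else get a p + 1) ∧ ∀ q, q ≠ p → get b q = get a q := by
    intro p hp a
    have hval : (if get a p = m p then 1 else get a p + 1) ∈ Finset.Icc 1 (m p) := by
      have h1 := Finset.mem_Icc.1 (hget p hp a)
      rw [Finset.mem_Icc]
      split_ifs <;> omega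
    refine ⟨Function.update a ⟨p, hp⟩ ⟨_, hval⟩, ?_, fun q hq => ?_⟩
    · rw [hget2 _ p hp, Function.update_self]
    · by_cases h : q ∈ Finset.Icc 1 k
      · rw [hget2 _ q h, hget2 _ q h, Function.update_of_ne]
        intro he
        exact hq (congrArg Subtype.val he)
      · rw [hget1 _ q h, hget1 _ q h]
  have hincex' : ∀ p (a : Λ), ∃ b : Λ, p ∈ Finset.Icc 1 k →
      get b p = (if get a p = m p then 1 else get a p + 1) ∧ ∀ q, q ≠ p → get b q = get a q := by
    intro p a
    by_cases hp : p ∈ Finset.Icc 1 k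
    · obtain ⟨b, hb⟩ := hincex p hp a
      exact ⟨b, fun _ => hb⟩
    · exact ⟨a, fun h => absurd h hp⟩
  choose inc hinc using hincex'
  have hc : (Finset.Icc 1 k).card = k := by simp
  have h0 : (0 : ℕ) ∉ Finset.Icc 1 k := by simp
  obtain ⟨σ, up, hst⟩ := gr_sound_lev (gr_tail_rabin Gs Rp m (Finset.Icc 1 k))
    (gr_op_aux (Gm := Gm) Gs Rp m k (Finset.Icc 1 k) ∅ᶜ hc hm)
    (gr_sound_aux Gs Rp m get inc (Finset.Icc 1 k) hget (fun p hp a => (hinc p a hp).1)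
      (fun p hp a => (hinc p a hp).2) hm k (Finset.Icc 1 k) ∅ᶜ hc subset_rfl)
    0 h0 (fun _ => ∅) 1 id le_rfl (fun a => by simp [hget1 a 0 h0]) (fun a => by simp [hget1 a 0 h0])
    (fun a q _ => rfl) ∅
  rw [← gr_Z_eq] at hst
  let Z := Gm.genRabinZ Gs Rp m k
  let c : Λ → V → V := fun a v => if v ∈ Z then σ a v else (Gm.succ_nonempty v).choose
  have hcl : ∀ a v, v ∈ Gm.V0 → Gm.E v (c a v) := by
    intro a v h0
    by_cases hv : v ∈ Z
    · simp only [c, if_pos hv]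
      exact hst.legal a v hv (Set.notMem_empty v) h0
    · simp only [c, if_neg hv]
      exact (Gm.succ_nonempty v).choose_spec
  refine ⟨Λ, inferInstance, a0, up, c, hcl, fun v0 hv0 => ⟨fun h v hv => hcl _ v hv, ?_⟩⟩
  intro ρ1 hρ1 π hπ hfair
  let ls : ℕ → Λ := fun i => List.foldl up a0 (List.ofFn fun j : Fin i => π j.1)
  have hls : ∀ i, ls (i + 1) = up (ls i) (π i) := by
    intro i
    simp only [ls]
    rw [List.ofFn_succ']
    simp [List.concat_eq_append]
  have hmove : ∀ i, π i ∈ Z → Gm.GrMove σ (ls i) (π i) (π (i + 1)) := by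
    intro i hi
    have h := hπ.2 i
    refine ⟨?_, fun h0 => ?_⟩
    · by_cases h0 : π i ∈ Gm.V0
      · rw [h.1 h0]
        exact hcl _ _ h0
      · have h1 := gr_V1_of_not_V0 h0
        rw [h.2 h1]
        exact hρ1 _ _ h1
    · rw [h.1 h0]
      simp only [c, if_pos hi]
      rfl
  have hZ : ∀ i, π i ∈ Z := by
    intro i
    induction i with
    | zero => rw [hπ.1]; exact hv0
    | succ i ih => exact hst.stay _ _ _ ih (Set.notMem_empty _) (hmove i ih)
  have hwin := hst.win ls π (fun i => ⟨hZ i, Set.notMem_empty _, hmove i (hZ i), hls i⟩)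
    ((gr_fair_iff π).1 hfair)
  rcases hwin with h | h
  · obtain ⟨i, -, hi⟩ := h 1 (by simp) 0
    exact absurd hi (Set.notMem_empty _)
  · exact h

end LiveGameGraph

end Soundness

/-- the permutation-based generalized Rabin fixpoint equals the
winning region of Player 0 in the fair adversarial generalized Rabin game, and a
finite-memory winning Player-0 strategy exists on it. -/
theorem fair_adversarial_gen_rabin {V : Type*} [Fintype V]
    (Gm : LiveGameGraph V) (k : ℕ) (Gs : ℕ → ℕ → Set V) (Rp : ℕ → Set V)
    (m : ℕ → ℕ) (hm : ∀ p ∈ Finset.Icc 1 k, 1 ≤ m p) (Zstar : Set V)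
    (hZ : Zstar = Gm.genRabinZ Gs Rp m k) :
    Zstar = Gm.WinningRegion
        (fun π => ∃ j ∈ Finset.Icc 1 k,
          (∃ N, ∀ i ≥ N, π i ∉ Rp j) ∧
          ∀ l ∈ Finset.Icc 1 (m j), ∀ N, ∃ i ≥ N, π i ∈ Gs j l) ∧
    ∃ (M : Type) (_ : Fintype M) (m0 : M) (upd : M → V → M) (c : M → V → V),
      (∀ mm v, v ∈ Gm.V0 → Gm.E v (c mm v)) ∧
      ∀ v0 ∈ Zstar,
        Gm.WinsFrom
          (fun π => ∃ j ∈ Finset.Icc 1 k,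
            (∃ N, ∀ i ≥ N, π i ∉ Rp j) ∧
            ∀ l ∈ Finset.Icc 1 (m j), ∀ N, ∃ i ≥ N, π i ∈ Gs j l)
          (fun h v => c (List.foldl upd m0 h) v) v0 := by
  subst hZ
  refine ⟨Set.Subset.antisymm ?_ (LiveGameGraph.gr_complete Gs Rp m k hm),
    LiveGameGraph.gr_sound Gs Rp m k hm⟩
  intro v hv
  obtain ⟨M, _, m0, upd, c, _, h⟩ := LiveGameGraph.gr_sound (Gm := Gm) Gs Rp m k hm
  exact ⟨_, h v hv⟩
end
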